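/- arXiv:0711.3258 — 2 statements merged into one kernel-verified Lean document; each statement's English description precedes it below -/
import Mathlib

section
/- Let n ≥ 2, μ ∈ (0,1), U ⊆ ℝ^{n-1} open, and h : U → (real symmetric positive definite (n-1)×(n-1) matrices) smooth. Let m⁰ : (1,∞)×U → ℝ, m¹ : (1,∞)×U → ℝ^{n-1}, m² : (1,∞)×U → (symmetric (n-1)×(n-1) matrices) be smooth with, for every compact K ⊆ U, every k ∈ ℕ and multi-index α, |∂_r^k∂_θ^α m⁰(r,θ)| ≤ C r^{-1-μ-k}, |∂_r^k∂_θ^α m¹(r,θ)| ≤ C r^{-(1+μ)/2-k}, |∂_r^k∂_θ^α m²(r,θ)| ≤ C r^{-μ-k} on (1,∞)×K. Form the n×n block matrix G(r,θ) = [[1+m⁰(r,θ), r·(m¹(r,θ))ᵀ],[r·m¹(r,θ), r²(h(θ)+m²(r,θ))]]. Then for every compact K ⊆ U there exists R ≥ 1 such that G(r,θ) is invertible for (r,θ) ∈ (R,∞)×K, and its inverse has the block form G(r,θ)^{-1} = [[1+b⁰(r,θ), r^{-1}(b¹(r,θ))ᵀ],[r^{-1}b¹(r,θ), r^{-2}(h(θ)^{-1}+b²(r,θ))]]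 where b⁰, b¹, b² are smooth on (R,∞)×K and satisfy |∂_r^k∂_θ^α b⁰| ≤ C' r^{-1-μ-k}, |∂_r^k∂_θ^α b¹| ≤ C' r^{-(1+μ)/2-k}, |∂_r^k∂_θ^α b²| ≤ C' r^{-μ-k} there. -/
open Real Set Filter Topology

namespace Scattering

/-- The Euclidean norm of a vector in `Fin m → ℝ`. -/
noncomputable def eNorm {m : ℕ} (v : Fin m → ℝ) : ℝ := Real.sqrt (∑ j, v j ^ 2)

/-- Partial derivative in the radial variable of a function of `(r, θ)`. -/
noncomputable def pderivR {m : ℕ} (f : ℝ → (Fin m → ℝ) → ℝ) : ℝ → (Fin m → ℝ) → ℝ :=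
  fun r θ => deriv (fun s => f s θ) r

/-- Partial derivative in the `j`-th angular variable of a function of `(r, θ)`. -/
noncomputable def pderivTheta {m : ℕ} (j : Fin m) (f : ℝ → (Fin m → ℝ) → ℝ) :
    ℝ → (Fin m → ℝ) → ℝ :=
  fun r θ => fderiv ℝ (f r) θ (Pi.single j 1)

/-- Iterated angular derivatives `∂_θ^α` for a multi-index `α` (a list of directions). -/
noncomputable def thetaDerivs {m : ℕ} (α : List (Fin m)) (f : ℝ → (Fin m → ℝ) → ℝ) :
    ℝ → (Fin m → ℝ) → ℝ :=
  α.foldr pderivTheta f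

/-- `DecayOn f ν S K` : for all `k, α` there is `C > 0` with
`|∂_r^k ∂_θ^α f(r,θ)| ≤ C r^{-ν-k}` for `r ∈ (S,∞)`, `θ ∈ K`. -/
def DecayOn {m : ℕ} (f : ℝ → (Fin m → ℝ) → ℝ) (ν S : ℝ) (K : Set (Fin m → ℝ)) : Prop :=
  ∀ (k : ℕ) (α : List (Fin m)), ∃ C > 0, ∀ r ∈ Ioi S, ∀ θ ∈ K,
    |(pderivR (m := m))^[k] (thetaDerivs α f) r θ| ≤ C * r ^ (-ν - (k : ℝ))

/-- The classical kinetic energy function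
`p(r,θ,ρ,ω) = ρ² + r⁻²Σ h^{jk} ω_j ω_k + a₀ ρ² + r⁻¹ Σ a₁^j ρ ω_j + r⁻² Σ a₂^{jk} ω_j ω_k`. -/
noncomputable def energy {m : ℕ} (hM : (Fin m → ℝ) → Matrix (Fin m) (Fin m) ℝ)
    (a0 : ℝ → (Fin m → ℝ) → ℝ) (a1 : ℝ → (Fin m → ℝ) → Fin m → ℝ)
    (a2 : ℝ → (Fin m → ℝ) → Matrix (Fin m) (Fin m) ℝ) :
    ℝ → (Fin m → ℝ) → ℝ → (Fin m → ℝ) → ℝ :=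
  fun r θ ρ ω =>
    ρ ^ 2 + (∑ j, ∑ k, hM θ j k * ω j * ω k) / r ^ 2 + a0 r θ * ρ ^ 2
      + (∑ j, a1 r θ j * ρ * ω j) / r + (∑ j, ∑ k, a2 r θ j k * ω j * ω k) / r ^ 2

section PhaseDerivs

variable {m : ℕ} (p : ℝ → (Fin m → ℝ) → ℝ → (Fin m → ℝ) → ℝ)

/-- `∂p/∂r`. -/
noncomputable def pdR (r : ℝ) (θ : Fin m → ℝ) (ρ : ℝ) (ω : Fin m → ℝ) : ℝ :=
  deriv (fun s => p s θ ρ ω) r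

/-- `∂p/∂θ_j`. -/
noncomputable def pdTheta (j : Fin m) (r : ℝ) (θ : Fin m → ℝ) (ρ : ℝ) (ω : Fin m → ℝ) : ℝ :=
  fderiv ℝ (fun θ' => p r θ' ρ ω) θ (Pi.single j 1)

/-- `∂p/∂ρ`. -/
noncomputable def pdRho (r : ℝ) (θ : Fin m → ℝ) (ρ : ℝ) (ω : Fin m → ℝ) : ℝ :=
  deriv (fun s => p r θ s ω) ρ

/-- `∂p/∂ω_j`. -/
noncomputable def pdOmega (j : Fin m) (r : ℝ) (θ : Fin m → ℝ) (ρ : ℝ) (ω : Fin m → ℝ) : ℝ :=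
  fderiv ℝ (fun ω' => p r θ ρ ω') ω (Pi.single j 1)

/-- `(r,θ,ρ,ω)` solves the Hamiltonian system
`ṙ = ∂p/∂ρ, θ̇ = ∂p/∂ω, ρ̇ = -∂p/∂r, ω̇ = -∂p/∂θ` on the set `I` of times. -/
def IsHamSolOn (r : ℝ → ℝ) (θ : ℝ → Fin m → ℝ) (ρ : ℝ → ℝ) (ω : ℝ → Fin m → ℝ)
    (I : Set ℝ) : Prop :=
  ∀ t ∈ I,
    HasDerivAt r (pdRho p (r t) (θ t) (ρ t) (ω t)) t ∧
    (∀ j, HasDerivAt (fun s => θ s j) (pdOmega p j (r t) (θ t) (ρ t) (ω t)) t) ∧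
    HasDerivAt ρ (-pdR p (r t) (θ t) (ρ t) (ω t)) t ∧
    (∀ j, HasDerivAt (fun s => ω s j) (-pdTheta p j (r t) (θ t) (ρ t) (ω t)) t)

/-- The interaction-picture (time-dependent) Hamiltonian `K(t,R,θ,ρ,ω) = ρ² - p(R+2tρ,θ,ρ,ω)`. -/
noncomputable def Kint (t R : ℝ) (θ : Fin m → ℝ) (ρ : ℝ) (ω : Fin m → ℝ) : ℝ :=
  ρ ^ 2 - p (R + 2 * t * ρ) θ ρ ω

/-- `∂K/∂R`. -/
noncomputable def KdR (t R : ℝ) (θ : Fin m → ℝ) (ρ : ℝ) (ω : Fin m → ℝ) : ℝ :=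
  deriv (fun x => Kint p t x θ ρ ω) R

/-- `∂K/∂θ_j`. -/
noncomputable def KdTheta (j : Fin m) (t R : ℝ) (θ : Fin m → ℝ) (ρ : ℝ) (ω : Fin m → ℝ) : ℝ :=
  fderiv ℝ (fun θ' => Kint p t R θ' ρ ω) θ (Pi.single j 1)

/-- `∂K/∂ρ`. -/
noncomputable def KdRho (t R : ℝ) (θ : Fin m → ℝ) (ρ : ℝ) (ω : Fin m → ℝ) : ℝ :=
  deriv (fun x => Kint p t R θ x ω) ρ

/-- `∂K/∂ω_j`. -/
noncomputable def KdOmega (j : Fin m) (t R : ℝ) (θ : Fin m → ℝ) (ρ : ℝ) (ω : Fin m → ℝ) : ℝ :=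
  fderiv ℝ (fun ω' => Kint p t R θ ρ ω') ω (Pi.single j 1)

end PhaseDerivs

/-- The phase space `ℝ × ℝ^m × ℝ × ℝ^m` with coordinates `(R, θ, ρ, ω)`. -/
abbrev Phase (m : ℕ) : Type := ℝ × (Fin m → ℝ) × ℝ × (Fin m → ℝ)

/-- A curve `f = (R,θ,ρ,ω)` solves the interaction-picture Hamiltonian system
`Ṙ = ∂K/∂ρ, θ̇ = ∂K/∂ω, ρ̇ = -∂K/∂R, ω̇ = -∂K/∂θ` on the set `I` of times. -/
def IsIntSolOn {m : ℕ} (p : ℝ → (Fin m → ℝ) → ℝ → (Fin m → ℝ) → ℝ)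
    (f : ℝ → Phase m) (I : Set ℝ) : Prop :=
  ∀ t ∈ I,
    HasDerivAt (fun s => (f s).1) (KdRho p t (f t).1 (f t).2.1 (f t).2.2.1 (f t).2.2.2) t ∧
    (∀ j, HasDerivAt (fun s => (f s).2.1 j)
      (KdOmega p j t (f t).1 (f t).2.1 (f t).2.2.1 (f t).2.2.2) t) ∧
    HasDerivAt (fun s => (f s).2.2.1)
      (-(KdR p t (f t).1 (f t).2.1 (f t).2.2.1 (f t).2.2.2)) t ∧
    (∀ j, HasDerivAt (fun s => (f s).2.2.2 j)
      (-(KdTheta p j t (f t).1 (f t).2.1 (f t).2.2.1 (f t).2.2.2)) t)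

/-- The data of a scattering metric of short-range type on the end `(1,∞) × U`:
the boundary metric `h` (smooth, symmetric, positive definite) and the coefficients
`a₀, a₁, a₂` of the kinetic energy, smooth on `(1,∞) × U` with the short-range decay
`|∂_r^k ∂_θ^α a₀| ≤ C r^{-1-μ-k}`, `|∂_r^k ∂_θ^α a₁| ≤ C r^{-μ-k}`,
`|∂_r^k ∂_θ^α a₂| ≤ C r^{-μ-k}` on `(1,∞) × K` for every compact `K ⊆ U`. -/
structure Coeffs (m : ℕ) (μ : ℝ) (U : Set (Fin m → ℝ)) where
  hM : (Fin m → ℝ) → Matrix (Fin m) (Fin m) ℝ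
  a0 : ℝ → (Fin m → ℝ) → ℝ
  a1 : ℝ → (Fin m → ℝ) → Fin m → ℝ
  a2 : ℝ → (Fin m → ℝ) → Matrix (Fin m) (Fin m) ℝ
  hM_smooth : ∀ j k, ContDiffOn ℝ (⊤ : ℕ∞) (fun θ => hM θ j k) U
  hM_symm : ∀ θ ∈ U, (hM θ).IsSymm
  hM_posdef : ∀ θ ∈ U, (hM θ).PosDef
  a0_smooth : ContDiffOn ℝ (⊤ : ℕ∞) (fun z : ℝ × (Fin m → ℝ) => a0 z.1 z.2) (Ioi (1:ℝ) ×ˢ U)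
  a1_smooth : ∀ j, ContDiffOn ℝ (⊤ : ℕ∞) (fun z : ℝ × (Fin m → ℝ) => a1 z.1 z.2 j) (Ioi (1:ℝ) ×ˢ U)
  a2_smooth : ∀ j k, ContDiffOn ℝ (⊤ : ℕ∞) (fun z : ℝ × (Fin m → ℝ) => a2 z.1 z.2 j k) (Ioi (1:ℝ) ×ˢ U)
  a2_symm : ∀ r θ j k, a2 r θ j k = a2 r θ k j
  a0_decay : ∀ K : Set (Fin m → ℝ), IsCompact K → K ⊆ U → DecayOn a0 (1 + μ) 1 K
  a1_decay : ∀ K : Set (Fin m → ℝ), IsCompact K → K ⊆ U →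
    ∀ j, DecayOn (fun r θ => a1 r θ j) μ 1 K
  a2_decay : ∀ K : Set (Fin m → ℝ), IsCompact K → K ⊆ U →
    ∀ j k, DecayOn (fun r θ => a2 r θ j k) μ 1 K

/-- The kinetic energy function associated to the data `c`. -/
noncomputable def Coeffs.p {m : ℕ} {μ : ℝ} {U : Set (Fin m → ℝ)} (c : Coeffs m μ U) :
    ℝ → (Fin m → ℝ) → ℝ → (Fin m → ℝ) → ℝ :=
  energy c.hM c.a0 c.a1 c.a2


/-- The `n × n` block matrix
`G(r,θ) = [[1 + m⁰, r(m¹)ᵀ], [r m¹, r²(h + m²)]]` of a scattering metric. -/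
noncomputable def metricBlock {m : ℕ} (hM : (Fin m → ℝ) → Matrix (Fin m) (Fin m) ℝ)
    (m0 : ℝ → (Fin m → ℝ) → ℝ) (m1 : ℝ → (Fin m → ℝ) → Fin m → ℝ)
    (m2 : ℝ → (Fin m → ℝ) → Matrix (Fin m) (Fin m) ℝ) (r : ℝ) (θ : Fin m → ℝ) :
    Matrix (Fin 1 ⊕ Fin m) (Fin 1 ⊕ Fin m) ℝ :=
  Matrix.fromBlocks (Matrix.of fun _ _ => 1 + m0 r θ)
    (Matrix.of fun _ j => r * m1 r θ j)
    (Matrix.of fun i _ => r * m1 r θ i)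
    (Matrix.of fun i j => r ^ 2 * (hM θ i j + m2 r θ i j))

/-- The block form `[[1 + b⁰, r⁻¹(b¹)ᵀ], [r⁻¹ b¹, r⁻²(h⁻¹ + b²)]]` of the inverse. -/
noncomputable def inverseBlock {m : ℕ} (hM : (Fin m → ℝ) → Matrix (Fin m) (Fin m) ℝ)
    (b0 : ℝ → (Fin m → ℝ) → ℝ) (b1 : ℝ → (Fin m → ℝ) → Fin m → ℝ)
    (b2 : ℝ → (Fin m → ℝ) → Matrix (Fin m) (Fin m) ℝ) (r : ℝ) (θ : Fin m → ℝ) :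
    Matrix (Fin 1 ⊕ Fin m) (Fin 1 ⊕ Fin m) ℝ :=
  Matrix.fromBlocks (Matrix.of fun _ _ => 1 + b0 r θ)
    (Matrix.of fun _ j => r⁻¹ * b1 r θ j)
    (Matrix.of fun i _ => r⁻¹ * b1 r θ i)
    (Matrix.of fun i j => (r ^ 2)⁻¹ * ((hM θ)⁻¹ i j + b2 r θ i j))

/-!
Conjugating by `diag(1, r, …, r)` removes all powers of `r`: the metric becomes `H + M` with
`H = diag(1, h)` and `M` a matrix whose entries decay with exponents `1 + μ`, `(1 + μ) / 2`, `μ`,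
each `∂_r` gaining a further power of `r`. With `P = H⁻¹M`,
`(H + M)⁻¹ - H⁻¹ = (P (1 + P)⁻¹ P - P) H⁻¹`.
Since `det (1 + P) → 1`, Cramer's formula makes the entries of `(1 + P)⁻¹` symbols of order `0` for
large `r`. The products keep the exponents of `M`: `H⁻¹` does not mix the blocks, and a product of
an entry of the `a`-th row and one of the `b`-th column of `P` decays at
least like the `(a, b)` entry, the sharpest case being `(1 + μ) / 2 + (1 + μ) / 2 = 1 + μ`.
-/

open Asymptotics TopologicalSpace
open scoped ContDiff

/-- Data grading the directional derivatives of functions on `X`: a weight `radius`, and directions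
`dir i` along which one differentiation is expected to gain the factor `radius ^ (-weight i)`. -/
structure WeightedFrame (ι X : Type*) where
  radius : X → ℝ
  one_le_radius : ∀ z, 1 ≤ radius z
  dir : ι → X
  weight : ι → ℝ

namespace WeightedFrame

section Radius

variable {ι X : Type*} (Φ : WeightedFrame ι X)

/-- The total weight of a list of directions. -/
def order (L : List ι) : ℝ := (L.map Φ.weight).sum

theorem order_concat (L : List ι) (i : ι) : Φ.order (L ++ [i]) = Φ.weight i + Φ.order L := by
  simp [order, add_comm]

theorem radius_pos (z : X) : 0 < Φ.radius z := one_pos.trans_le (Φ.one_le_radius z)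

variable {Φ} {l : Filter X}

theorem isBigO_radius_rpow {a b : ℝ} (hab : a ≤ b) :
    (fun z => Φ.radius z ^ a) =O[l] fun z => Φ.radius z ^ b :=
  IsBigO.of_bound' <| .of_forall fun z => by
    rw [norm_of_nonneg (rpow_nonneg (Φ.radius_pos z).le _),
      norm_of_nonneg (rpow_nonneg (Φ.radius_pos z).le _)]
    exact rpow_le_rpow_of_exponent_le (Φ.one_le_radius z) hab

theorem isBigO_mul_radius_rpow {F G : X → ℝ} {ν κ : ℝ}
    (hF : F =O[l] fun z => Φ.radius z ^ (-ν)) (hG : G =O[l] fun z => Φ.radius z ^ (-κ)) :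
    (fun z => F z * G z) =O[l] fun z => Φ.radius z ^ (-(ν + κ)) := by
  simpa only [← rpow_add (Φ.radius_pos _), ← neg_add] using hF.mul hG

end Radius

section Derivatives

variable {ι X : Type*} [NormedAddCommGroup X] [NormedSpace ℝ X] (Φ : WeightedFrame ι X)

/-- The derivative along the `i`-th direction of the frame. -/
noncomputable def pderiv (i : ι) (F : X → ℝ) : X → ℝ := fun z => fderiv ℝ F z (Φ.dir i)

/-- Iterated derivatives along a list of directions; the head of the list is applied last. -/
noncomputable def pderivs (L : List ι) (F : X → ℝ) : X → ℝ := L.foldr Φ.pderiv F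

variable {Φ} {W : Opens X} {F G : X → ℝ}

theorem pderivs_concat (L : List ι) (i : ι) (F : X → ℝ) :
    Φ.pderivs (L ++ [i]) F = Φ.pderivs L (Φ.pderiv i F) := by
  simp [pderivs]

theorem differentiableAt_of_contDiffOn (hF : ContDiffOn ℝ ∞ F W) {z : X} (hz : z ∈ W) :
    DifferentiableAt ℝ F z :=
  (hF.contDiffAt (W.isOpen.mem_nhds hz)).differentiableAt (by simp)

theorem contDiffOn_pderiv (hF : ContDiffOn ℝ ∞ F W) (i : ι) : ContDiffOn ℝ ∞ (Φ.pderiv i F) W :=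
  (hF.fderiv_of_isOpen W.isOpen (by simp)).clm_apply contDiffOn_const

theorem contDiffOn_pderivs (hF : ContDiffOn ℝ ∞ F W) (L : List ι) :
    ContDiffOn ℝ ∞ (Φ.pderivs L F) W := by
  induction L with
  | nil => exact hF
  | cons i L ih => exact contDiffOn_pderiv ih i

theorem pderiv_congr (h : EqOn F G W) (i : ι) : EqOn (Φ.pderiv i F) (Φ.pderiv i G) W :=
  fun z hz => by
    have hFG : F =ᶠ[𝓝 z] G := h.eventuallyEq_of_mem (W.isOpen.mem_nhds hz)
    simp only [pderiv, hFG.fderiv_eq]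

theorem pderivs_congr (h : EqOn F G W) (L : List ι) : EqOn (Φ.pderivs L F) (Φ.pderivs L G) W := by
  induction L with
  | nil => exact h
  | cons i L ih => exact pderiv_congr ih i

theorem pderiv_const (i : ι) (c : ℝ) : Φ.pderiv i (fun _ => c) = fun _ => 0 := by
  funext z
  simp [pderiv]

theorem pderivs_zero (L : List ι) : Φ.pderivs L (fun _ => 0) = fun _ => 0 := by
  induction L with
  | nil => rfl
  | cons i L ih => exact (congrArg (Φ.pderiv i) ih).trans (pderiv_const i 0)

theorem pderiv_add (hF : ContDiffOn ℝ ∞ F W) (hG : ContDiffOn ℝ ∞ G W) (i : ι) :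
    EqOn (Φ.pderiv i fun z => F z + G z) (fun z => Φ.pderiv i F z + Φ.pderiv i G z) W :=
  fun z hz => by
    simp [pderiv, fderiv_fun_add (differentiableAt_of_contDiffOn hF hz)
      (differentiableAt_of_contDiffOn hG hz)]

theorem pderivs_add (hF : ContDiffOn ℝ ∞ F W) (hG : ContDiffOn ℝ ∞ G W) (L : List ι) :
    EqOn (Φ.pderivs L fun z => F z + G z) (fun z => Φ.pderivs L F z + Φ.pderivs L G z) W := by
  induction L with
  | nil => exact fun z _ => rfl
  | cons i L ih =>
    exact (pderiv_congr ih i).trans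
      (pderiv_add (contDiffOn_pderivs hF L) (contDiffOn_pderivs hG L) i)

theorem pderiv_mul (hF : ContDiffOn ℝ ∞ F W) (hG : ContDiffOn ℝ ∞ G W) (i : ι) :
    EqOn (Φ.pderiv i fun z => F z * G z)
      (fun z => Φ.pderiv i F z * G z + F z * Φ.pderiv i G z) W :=
  fun z hz => by
    simp only [pderiv, fderiv_fun_mul (differentiableAt_of_contDiffOn hF hz)
      (differentiableAt_of_contDiffOn hG hz), add_apply, smul_apply, smul_eq_mul]
    ring

theorem pderiv_inv_pow (hF : ContDiffOn ℝ ∞ F W) (hF0 : ∀ z ∈ W, F z ≠ 0) (n : ℕ) (i : ι) :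
    EqOn (Φ.pderiv i fun z => (F z)⁻¹ ^ n)
      (fun z => -(n * Φ.pderiv i F z * (F z)⁻¹ ^ (n + 1))) W :=
  fun z hz => by
    have hpow : HasDerivAt (fun y : ℝ => y⁻¹ ^ n) (n * (F z)⁻¹ ^ (n - 1) * -(F z ^ 2)⁻¹) (F z) :=
      (hasDerivAt_inv (hF0 z hz)).pow n
    have hF' : HasFDerivAt F (fderiv ℝ F z) z := (differentiableAt_of_contDiffOn hF hz).hasFDerivAt
    change fderiv ℝ ((fun y : ℝ => y⁻¹ ^ n) ∘ F) z (Φ.dir i) = _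
    simp only [(hpow.comp_hasFDerivAt z hF').fderiv, pderiv, smul_apply, smul_eq_mul]
    rcases n with _ | n
    · simp
    · rw [Nat.add_sub_cancel]
      ring

theorem pderiv_comm (hF : ContDiffOn ℝ ∞ F W) (i j : ι) :
    EqOn (Φ.pderiv i (Φ.pderiv j F)) (Φ.pderiv j (Φ.pderiv i F)) W := fun z hz => by
  have hsymm : IsSymmSndFDerivAt ℝ F z :=
    (hF.contDiffAt (W.isOpen.mem_nhds hz)).isSymmSndFDerivAt
      (by rw [minSmoothness_of_isRCLikeNormedField]; exact WithTop.coe_le_coe.2 le_top)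
  have hdiff : DifferentiableAt ℝ (fderiv ℝ F) z :=
    ((hF.fderiv_of_isOpen W.isOpen (m := ∞) (by simp)).contDiffAt
      (W.isOpen.mem_nhds hz)).differentiableAt (by simp)
  have hsecond (v w : X) :
      fderiv ℝ (fun y => fderiv ℝ F y w) z v = fderiv ℝ (fderiv ℝ F) z v w := by
    simp [fderiv_clm_apply hdiff (differentiableAt_const w)]
  exact (hsecond _ _).trans ((hsymm _ _).trans (hsecond _ _).symm)

theorem pderivs_perm {L L' : List ι} (hL : L.Perm L') (hF : ContDiffOn ℝ ∞ F W) :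
    EqOn (Φ.pderivs L F) (Φ.pderivs L' F) W := by
  induction hL with
  | nil => exact fun z _ => rfl
  | cons i _ ih => exact pderiv_congr ih i
  | swap i j L => exact pderiv_comm (contDiffOn_pderivs hF L) j i
  | trans _ _ ih ih' => exact ih.trans ih'

end Derivatives

end WeightedFrame

section SymbolCalculus

open WeightedFrame

variable {ι X : Type*} [NormedAddCommGroup X] [NormedSpace ℝ X]

/-- `F` is a symbol of order `-ν` on `W`: it is smooth, and differentiating it along a list `L` of
frame directions gives a function bounded on `W` by a multiple of
`radius ^ (-(ν + Φ.order L))`. -/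
structure IsSymbol (Φ : WeightedFrame ι X) (W : Opens X) (F : X → ℝ) (ν : ℝ) : Prop where
  contDiffOn : ContDiffOn ℝ ∞ F W
  isBigO_pderivs : ∀ L : List ι,
    Φ.pderivs L F =O[𝓟 (W : Set X)] fun z => Φ.radius z ^ (-(ν + Φ.order L))

namespace IsSymbol

variable {Φ : WeightedFrame ι X} {W : Opens X} {F G : X → ℝ} {ν κ : ℝ}

theorem isBigO (hF : IsSymbol Φ W F ν) : F =O[𝓟 (W : Set X)] fun z => Φ.radius z ^ (-ν) := by
  simpa [pderivs, order] using hF.isBigO_pderivs []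

theorem congr (hF : IsSymbol Φ W F ν) (h : EqOn F G W) : IsSymbol Φ W G ν where
  contDiffOn := hF.contDiffOn.congr h.symm
  isBigO_pderivs L := (hF.isBigO_pderivs L).congr'
    (eventuallyEq_principal.2 (pderivs_congr h L)) .rfl

theorem mono_set {W' : Opens X} (hF : IsSymbol Φ W F ν) (hW : W' ≤ W) : IsSymbol Φ W' F ν where
  contDiffOn := hF.contDiffOn.mono hW
  isBigO_pderivs L := (hF.isBigO_pderivs L).mono (principal_mono.2 hW)

theorem mono_order (hF : IsSymbol Φ W F ν) (hκ : κ ≤ ν) : IsSymbol Φ W F κ where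
  contDiffOn := hF.contDiffOn
  isBigO_pderivs L := (hF.isBigO_pderivs L).trans (isBigO_radius_rpow (by linarith))

theorem pderiv (hF : IsSymbol Φ W F ν) (i : ι) : IsSymbol Φ W (Φ.pderiv i F) (ν + Φ.weight i) where
  contDiffOn := contDiffOn_pderiv hF.contDiffOn i
  isBigO_pderivs L := by
    simpa only [pderivs_concat, order_concat, add_assoc] using hF.isBigO_pderivs (L ++ [i])

theorem zero : IsSymbol Φ W (fun _ => 0) ν where
  contDiffOn := contDiffOn_const
  isBigO_pderivs L := by simpa only [pderivs_zero] using isBigO_zero _ _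

theorem const (c : ℝ) : IsSymbol Φ W (fun _ => c) 0 where
  contDiffOn := contDiffOn_const
  isBigO_pderivs L := by
    induction L using List.reverseRecOn with
    | nil =>
      simpa [pderivs, order] using isBigO_const_const c (one_ne_zero (α := ℝ)) (𝓟 (W : Set X))
    | append_singleton L i _ =>
      simpa only [pderivs_concat, pderiv_const, pderivs_zero] using isBigO_zero _ _

theorem add (hF : IsSymbol Φ W F ν) (hG : IsSymbol Φ W G ν) :
    IsSymbol Φ W (fun z => F z + G z) ν where
  contDiffOn := hF.contDiffOn.add hG.contDiffOn
  isBigO_pderivs L := ((hF.isBigO_pderivs L).add (hG.isBigO_pderivs L)).congr'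
    (eventuallyEq_principal.2 (pderivs_add hF.contDiffOn hG.contDiffOn L).symm) .rfl

theorem mul (hF : IsSymbol Φ W F ν) (hG : IsSymbol Φ W G κ) :
    IsSymbol Φ W (fun z => F z * G z) (ν + κ) where
  contDiffOn := hF.contDiffOn.mul hG.contDiffOn
  isBigO_pderivs L := by
    induction L using List.reverseRecOn generalizing F G ν κ with
    | nil => simpa [pderivs, order] using isBigO_mul_radius_rpow hF.isBigO hG.isBigO
    | append_singleton L i ih =>
      have hF' := hF.pderiv i
      have hG' := hG.pderiv i
      have hleibniz : EqOn (Φ.pderivs (L ++ [i]) fun z => F z * G z)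
          (fun z => Φ.pderivs L (fun y => Φ.pderiv i F y * G y) z +
            Φ.pderivs L (fun y => F y * Φ.pderiv i G y) z) W := by
        rw [pderivs_concat]
        exact (pderivs_congr (pderiv_mul hF.contDiffOn hG.contDiffOn i) L).trans
          (pderivs_add (hF'.contDiffOn.mul hG.contDiffOn) (hF.contDiffOn.mul hG'.contDiffOn) L)
      refine IsBigO.congr' (.add ?_ ?_) (eventuallyEq_principal.2 hleibniz.symm) .rfl
      · have horder : ν + κ + Φ.order (L ++ [i]) = ν + Φ.weight i + κ + Φ.order L := by
          rw [order_concat]; ring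
        simpa only [horder] using ih hF' hG
      · have horder : ν + κ + Φ.order (L ++ [i]) = ν + (κ + Φ.weight i) + Φ.order L := by
          rw [order_concat]; ring
        simpa only [horder] using ih hF hG'

theorem neg (hF : IsSymbol Φ W F ν) : IsSymbol Φ W (fun z => -F z) ν := by
  simpa using (const (-1)).mul hF

theorem sub (hF : IsSymbol Φ W F ν) (hG : IsSymbol Φ W G ν) :
    IsSymbol Φ W (fun z => F z - G z) ν := by
  simpa only [sub_eq_add_neg] using hF.add hG.neg

theorem sum {β : Type*} (s : Finset β) {f : β → X → ℝ} (hf : ∀ i ∈ s, IsSymbol Φ W (f i) ν) :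
    IsSymbol Φ W (fun z => ∑ i ∈ s, f i z) ν := by
  induction s using Finset.cons_induction with
  | empty => simpa only [Finset.sum_empty] using zero
  | cons a s ha ih =>
    simp only [Finset.forall_mem_cons] at hf
    simpa only [Finset.sum_cons] using hf.1.add (ih hf.2)

theorem prod {β : Type*} (s : Finset β) {f : β → X → ℝ} (hf : ∀ i ∈ s, IsSymbol Φ W (f i) 0) :
    IsSymbol Φ W (fun z => ∏ i ∈ s, f i z) 0 := by
  induction s using Finset.cons_induction with
  | empty => simpa only [Finset.prod_empty] using const 1
  | cons a s ha ih =>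
    simp only [Finset.forall_mem_cons] at hf
    simpa only [Finset.prod_cons, add_zero] using hf.1.mul (ih hf.2)

-- The shape `G / F ^ n` is stable under `∂`: `∂(G / F ^ n) = (∂G * F - n * G * ∂F) / F ^ (n + 1)`.
theorem isBigO_pderivs_mul_inv_pow (hF : IsSymbol Φ W F 0) {c : ℝ} (hc : 0 < c)
    (hcF : ∀ z ∈ W, c ≤ |F z|) (hG : IsSymbol Φ W G ν) (n : ℕ) (L : List ι) :
    (Φ.pderivs L fun z => G z * (F z)⁻¹ ^ n) =O[𝓟 (W : Set X)]
      fun z => Φ.radius z ^ (-(ν + Φ.order L)) := by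
  have hF0 : ∀ z ∈ W, F z ≠ 0 := fun z hz => abs_pos.1 (hc.trans_le (hcF z hz))
  induction L using List.reverseRecOn generalizing G ν n with
  | nil =>
    have hbdd : (fun z => (F z)⁻¹ ^ n) =O[𝓟 (W : Set X)] fun _ => (1 : ℝ) :=
      isBigO_principal.2 ⟨c⁻¹ ^ n, fun z hz => by
        simpa using pow_le_pow_left₀ (by positivity) (inv_anti₀ hc (hcF z hz)) n⟩
    simpa [pderivs, order] using hG.isBigO.mul hbdd
  | append_singleton L i ih =>
    have hnum : IsSymbol Φ W (fun z => Φ.pderiv i G z * F z - n * (G z * Φ.pderiv i F z))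
        (ν + Φ.weight i) := by
      simpa only [add_zero, zero_add] using
        ((hG.pderiv i).mul hF).sub (by simpa using (const n).mul (hG.mul (hF.pderiv i)))
    have hquot : EqOn (Φ.pderiv i fun z => G z * (F z)⁻¹ ^ n)
        (fun z => (Φ.pderiv i G z * F z - n * (G z * Φ.pderiv i F z)) * (F z)⁻¹ ^ (n + 1)) W := by
      intro z hz
      have hpow : ContDiffOn ℝ ∞ (fun z => (F z)⁻¹ ^ n) W := (hF.contDiffOn.inv hF0).pow n
      simp only [pderiv_mul hG.contDiffOn hpow i hz, pderiv_inv_pow hF.contDiffOn hF0 n i hz]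
      linear_combination -(Φ.pderiv i G z * (F z)⁻¹ ^ n) * mul_inv_cancel₀ (hF0 z hz)
    rw [pderivs_concat, order_concat, ← add_assoc]
    exact (ih hnum (n + 1)).congr' (eventuallyEq_principal.2 (pderivs_congr hquot L).symm) .rfl

theorem inv (hF : IsSymbol Φ W F 0) {c : ℝ} (hc : 0 < c) (hcF : ∀ z ∈ W, c ≤ |F z|) :
    IsSymbol Φ W (fun z => (F z)⁻¹) 0 where
  contDiffOn := hF.contDiffOn.inv fun z hz => abs_pos.1 (hc.trans_le (hcF z hz))
  isBigO_pderivs L := by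
    simpa only [one_mul, pow_one] using hF.isBigO_pderivs_mul_inv_pow hc hcF (const 1) 1 L

theorem tendsto_zero (hF : IsSymbol Φ W F ν) (hν : 0 < ν) :
    Tendsto F (comap Φ.radius atTop ⊓ 𝓟 (W : Set X)) (𝓝 0) :=
  (hF.isBigO.mono inf_le_right).trans_tendsto <|
    ((tendsto_rpow_neg_atTop hν).comp tendsto_comap).mono_left inf_le_left

end IsSymbol

/-- The entry `A a b` of the matrix-valued function `A` is a symbol of order `-o a b`. -/
def IsSymbolMatrix {p q : Type*} (Φ : WeightedFrame ι X) (W : Opens X) (A : X → Matrix p q ℝ)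
    (o : p → q → ℝ) : Prop :=
  ∀ a b, IsSymbol Φ W (fun z => A z a b) (o a b)

namespace IsSymbolMatrix

variable {Φ : WeightedFrame ι X} {W : Opens X} {p q s t : Type*}

theorem congr {A B : X → Matrix p q ℝ} {o : p → q → ℝ} (hA : IsSymbolMatrix Φ W A o)
    (h : EqOn A B W) : IsSymbolMatrix Φ W B o :=
  fun a b => (hA a b).congr fun _ hz => congrFun₂ (h hz) a b

theorem mono_set {A : X → Matrix p q ℝ} {o : p → q → ℝ} {W' : Opens X}
    (hA : IsSymbolMatrix Φ W A o) (hW : W' ≤ W) : IsSymbolMatrix Φ W' A o :=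
  fun a b => (hA a b).mono_set hW

theorem mono_order {A : X → Matrix p q ℝ} {o o' : p → q → ℝ}
    (hA : IsSymbolMatrix Φ W A o) (ho : o' ≤ o) : IsSymbolMatrix Φ W A o' :=
  fun a b => (hA a b).mono_order (ho a b)

theorem const (A : Matrix p q ℝ) : IsSymbolMatrix Φ W (fun _ => A) 0 :=
  fun a b => .const (A a b)

theorem add {A B : X → Matrix p q ℝ} {o : p → q → ℝ} (hA : IsSymbolMatrix Φ W A o)
    (hB : IsSymbolMatrix Φ W B o) : IsSymbolMatrix Φ W (fun z => A z + B z) o :=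
  fun a b => (hA a b).add (hB a b)

theorem sub {A B : X → Matrix p q ℝ} {o : p → q → ℝ} (hA : IsSymbolMatrix Φ W A o)
    (hB : IsSymbolMatrix Φ W B o) : IsSymbolMatrix Φ W (fun z => A z - B z) o :=
  fun a b => (hA a b).sub (hB a b)

theorem mul [Fintype q] {A : X → Matrix p q ℝ} {B : X → Matrix q s ℝ} {oA : p → q → ℝ}
    {oB : q → s → ℝ} {o : p → s → ℝ} (hA : IsSymbolMatrix Φ W A oA)
    (hB : IsSymbolMatrix Φ W B oB) (ho : ∀ a c b, o a b ≤ oA a c + oB c b) :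
    IsSymbolMatrix Φ W (fun z => A z * B z) o := fun a b => by
  simp only [Matrix.mul_apply]
  exact .sum _ fun c _ => ((hA a c).mul (hB c b)).mono_order (ho a c b)

theorem mul_mul [Fintype q] [Fintype s] {A : X → Matrix p q ℝ} {B : X → Matrix q s ℝ}
    {C : X → Matrix s t ℝ} {oA : p → q → ℝ} {oB : q → s → ℝ} {oC : s → t → ℝ} {o : p → t → ℝ}
    (hA : IsSymbolMatrix Φ W A oA) (hB : IsSymbolMatrix Φ W B oB) (hC : IsSymbolMatrix Φ W C oC)
    (ho : ∀ a c d b, o a b ≤ oA a c + oB c d + oC d b) :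
    IsSymbolMatrix Φ W (fun z => A z * B z * C z) o := fun a b => by
  simp only [Matrix.mul_apply, Finset.sum_mul]
  exact .sum _ fun d _ => .sum _ fun c _ =>
    (((hA a c).mul (hB c d)).mul (hC d b)).mono_order (ho a c d b)

variable [Fintype p] [DecidableEq p]

theorem det {A : X → Matrix p p ℝ} (hA : IsSymbolMatrix Φ W A 0) :
    IsSymbol Φ W (fun z => (A z).det) 0 := by
  simp only [Matrix.det_apply']
  refine .sum _ fun σ _ => ?_
  simpa only [add_zero] using (IsSymbol.const _).mul (IsSymbol.prod _ fun i _ => hA (σ i) i)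

theorem adjugate {A : X → Matrix p p ℝ} (hA : IsSymbolMatrix Φ W A 0) :
    IsSymbolMatrix Φ W (fun z => (A z).adjugate) 0 := fun a b => by
  simp only [Matrix.adjugate_apply]
  refine det fun c d => ?_
  by_cases hc : c = b
  · simpa only [hc, Matrix.updateRow_self] using .const _
  · simpa only [Matrix.updateRow_ne hc] using hA c d

theorem inv {A : X → Matrix p p ℝ} (hA : IsSymbolMatrix Φ W A 0) {c : ℝ} (hc : 0 < c)
    (hdet : ∀ z ∈ W, c ≤ |(A z).det|) : IsSymbolMatrix Φ W (fun z => (A z)⁻¹) 0 := fun a b => by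
  simp only [Matrix.inv_def, Ring.inverse_eq_inv', Matrix.smul_apply, smul_eq_mul]
  simpa only [Pi.zero_apply, add_zero] using (hA.det.inv hc hdet).mul (hA.adjugate a b)

theorem exists_half_le_abs_det_one_add {P : X → Matrix p p ℝ} {o : p → p → ℝ}
    (hP : IsSymbolMatrix Φ W P o) (ho : ∀ a b, 0 < o a b) :
    ∃ R, ∀ z ∈ W, R < Φ.radius z → 1 / 2 ≤ |(1 + P z).det| := by
  have hPzero : Tendsto P (comap Φ.radius atTop ⊓ 𝓟 (W : Set X)) (𝓝 0) :=
    tendsto_pi_nhds.2 fun a => tendsto_pi_nhds.2 fun b => (hP a b).tendsto_zero (ho a b)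
  have hcont : Continuous fun N : Matrix p p ℝ => |(1 + N).det| := by fun_prop
  have hone : Tendsto (fun z => |(1 + P z).det|) (comap Φ.radius atTop ⊓ 𝓟 (W : Set X)) (𝓝 1) := by
    simpa [Function.comp_def] using (hcont.tendsto 0).comp hPzero
  have hev := eventually_inf_principal.1 (hone.eventually_const_le one_half_lt_one)
  obtain ⟨R, -, hR⟩ := (atTop_basis_Ioi.comap Φ.radius).eventually_iff.1 hev
  exact ⟨R, fun z hz hRz => hR hRz hz⟩

end IsSymbolMatrix

theorem one_add_inv_eq_of_isUnit {n 𝕜 : Type*} [Fintype n] [DecidableEq n] [CommRing 𝕜]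
    {P : Matrix n n 𝕜} (hP : IsUnit (1 + P)) :
    (1 + P)⁻¹ = 1 - P + P * (1 + P)⁻¹ * P := by
  have hdet := (Matrix.isUnit_iff_isUnit_det _).1 hP
  have hleft : P * (1 + P)⁻¹ = 1 - (1 + P)⁻¹ := by
    rw [eq_sub_iff_add_eq', ← one_add_mul, Matrix.mul_nonsing_inv _ hdet]
  have hright : (1 + P)⁻¹ * P = 1 - (1 + P)⁻¹ := by
    rw [eq_sub_iff_add_eq', ← mul_one_add, Matrix.nonsing_inv_mul _ hdet]
  rw [hleft, sub_mul, one_mul, hright]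
  abel

theorem add_eq_mul_one_add_inv_mul {n 𝕜 : Type*} [Fintype n] [DecidableEq n] [CommRing 𝕜]
    {H : Matrix n n 𝕜} (hH : IsUnit H) (M : Matrix n n 𝕜) : H + M = H * (1 + H⁻¹ * M) := by
  rw [mul_add, mul_one,
    Matrix.mul_nonsing_inv_cancel_left _ _ ((Matrix.isUnit_iff_isUnit_det _).1 hH)]

theorem add_inv_sub_inv {n 𝕜 : Type*} [Fintype n] [DecidableEq n] [CommRing 𝕜]
    {H M : Matrix n n 𝕜} (hH : IsUnit H) (hP : IsUnit (1 + H⁻¹ * M)) :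
    (H + M)⁻¹ - H⁻¹ = (H⁻¹ * M * (1 + H⁻¹ * M)⁻¹ * (H⁻¹ * M) - H⁻¹ * M) * H⁻¹ := by
  rw [add_eq_mul_one_add_inv_mul hH, Matrix.mul_inv_rev]
  nth_rewrite 1 [one_add_inv_eq_of_isUnit hP]
  noncomm_ring

theorem IsSymbolMatrix.exists_isUnit_add_and_inv_sub_inv {Φ : WeightedFrame ι X} {W : Opens X}
    {n : Type*} [Fintype n] [DecidableEq n] {H M : X → Matrix n n ℝ} {η o : n → n → ℝ}
    (hHunit : ∀ z ∈ W, IsUnit (H z)) (hH : IsSymbolMatrix Φ W (fun z => (H z)⁻¹) η)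
    (hM : IsSymbolMatrix Φ W M o) (ho : ∀ a b, 0 < o a b)
    (hηo : ∀ a c b, o a b ≤ η a c + o c b) (hoη : ∀ a c b, o a b ≤ o a c + η c b)
    (hoo : ∀ a c d b, o a b ≤ o a c + o d b) :
    ∃ R, ∀ W' ≤ W, (∀ z ∈ W', R < Φ.radius z) →
      (∀ z ∈ W', IsUnit (H z + M z)) ∧
        IsSymbolMatrix Φ W' (fun z => (H z + M z)⁻¹ - (H z)⁻¹) o := by
  have hP : IsSymbolMatrix Φ W (fun z => (H z)⁻¹ * M z) o := hH.mul hM hηo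
  obtain ⟨R, hR⟩ := hP.exists_half_le_abs_det_one_add ho
  refine ⟨R, fun W' hW' hRW' => ?_⟩
  have hdet : ∀ z ∈ W', 1 / 2 ≤ |(1 + (H z)⁻¹ * M z).det| := fun z hz => hR z (hW' hz) (hRW' z hz)
  have hPunit : ∀ z ∈ W', IsUnit (1 + (H z)⁻¹ * M z) := fun z hz =>
    (Matrix.isUnit_iff_isUnit_det _).2
      (isUnit_iff_ne_zero.2 (abs_pos.1 (one_half_pos.trans_le (hdet z hz))))
  have hP' := hP.mono_set hW'
  have hQ : IsSymbolMatrix Φ W' (fun z => (1 + (H z)⁻¹ * M z)⁻¹) 0 :=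
    ((const 1).add (hP'.mono_order fun a b => (ho a b).le)).inv one_half_pos hdet
  refine ⟨fun z hz => ?_, ?_⟩
  · rw [add_eq_mul_one_add_inv_mul (hHunit z (hW' hz))]
    exact (hHunit z (hW' hz)).mul (hPunit z hz)
  · have hPQP : IsSymbolMatrix Φ W' (fun z =>
        (H z)⁻¹ * M z * (1 + (H z)⁻¹ * M z)⁻¹ * ((H z)⁻¹ * M z)) o :=
      hP'.mul_mul hQ hP' fun a c d b => by simpa using hoo a c d b
    refine ((hPQP.sub hP').mul (hH.mono_set hW') hoη).congr fun z hz => ?_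
    exact (add_inv_sub_inv (hHunit z (hW' hz)) (hPunit z hz)).symm

end SymbolCalculus

section PolarFrame

open WeightedFrame

variable {m : ℕ}

/-- The coordinate frame of `(r, θ) ∈ ℝ × ℝᵐ`, in which only `∂_r` (the direction `none`) gains a
power of `r`. The radius is truncated at `1`, so that it is `r` on the end `1 < r`. -/
noncomputable def polarFrame (m : ℕ) : WeightedFrame (Option (Fin m)) (ℝ × (Fin m → ℝ)) where
  radius z := max 1 z.1
  one_le_radius _ := le_max_left _ _
  dir i := i.elim (1, 0) fun j => (0, Pi.single j 1)
  weight i := i.elim 1 fun _ => 0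

/-- The open set `(R, ∞) × V`. -/
def conicalEnd (R : ℝ) (V : Opens (Fin m → ℝ)) : Opens (ℝ × (Fin m → ℝ)) :=
  ⟨Ioi R ×ˢ V, isOpen_Ioi.prod V.isOpen⟩

theorem conicalEnd_anti {R R' : ℝ} (hR : R ≤ R') (V : Opens (Fin m → ℝ)) :
    conicalEnd R' V ≤ conicalEnd R V :=
  prod_mono_left (Ioi_subset_Ioi hR)

theorem polarFrame_radius_eq {R : ℝ} (hR : 1 ≤ R) {V : Opens (Fin m → ℝ)} {z : ℝ × (Fin m → ℝ)}
    (hz : z ∈ conicalEnd R V) : (polarFrame m).radius z = z.1 :=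
  max_eq_right (hR.trans (le_of_lt hz.1))

variable {W : Opens (ℝ × (Fin m → ℝ))} {F : ℝ × (Fin m → ℝ) → ℝ} {f : ℝ → (Fin m → ℝ) → ℝ}

theorem pderivR_eqOn_pderiv (hF : ContDiffOn ℝ ∞ F W) (h : EqOn (fun z => f z.1 z.2) F W) :
    EqOn (fun z => pderivR f z.1 z.2) ((polarFrame m).pderiv none F) W := by
  rintro ⟨r, θ⟩ hz
  have hline : HasDerivAt (fun s : ℝ => (s, θ)) ((1 : ℝ), (0 : Fin m → ℝ)) r :=
    (hasDerivAt_id r).prodMk (hasDerivAt_const r θ)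
  have hcomp : HasDerivAt (F ∘ fun s : ℝ => (s, θ)) (fderiv ℝ F (r, θ) (1, 0)) r :=
    (differentiableAt_of_contDiffOn hF hz).hasFDerivAt.comp_hasDerivAt r hline
  have hev : (fun s => f s θ) =ᶠ[𝓝 r] F ∘ fun s : ℝ => (s, θ) := by
    filter_upwards [hline.continuousAt.preimage_mem_nhds (W.isOpen.mem_nhds hz)] with s hs
      using h hs
  exact hev.deriv_eq.trans hcomp.deriv

theorem pderivTheta_eqOn_pderiv (hF : ContDiffOn ℝ ∞ F W) (h : EqOn (fun z => f z.1 z.2) F W)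
    (j : Fin m) :
    EqOn (fun z => pderivTheta j f z.1 z.2) ((polarFrame m).pderiv (some j) F) W := by
  rintro ⟨r, θ⟩ hz
  have hslice := hasFDerivAt_prodMk_right (𝕜 := ℝ) r θ
  have hcomp := (differentiableAt_of_contDiffOn hF hz).hasFDerivAt.comp θ hslice
  have hev : f r =ᶠ[𝓝 θ] F ∘ fun s : Fin m → ℝ => (r, s) := by
    filter_upwards [hslice.continuousAt.preimage_mem_nhds (W.isOpen.mem_nhds hz)] with s hs
      using h hs
  simp [pderivTheta, pderiv, polarFrame, hev.fderiv_eq, hcomp.fderiv]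

/-- The directions of the derivative `∂_r^k ∂_θ^α`. -/
def polarDirs (k : ℕ) (α : List (Fin m)) : List (Option (Fin m)) :=
  List.replicate k none ++ α.map some

theorem pderivR_iterate_thetaDerivs_eqOn
    (hf : ContDiffOn ℝ ∞ (fun z => f z.1 z.2) (W : Set (ℝ × (Fin m → ℝ))))
    (k : ℕ) (α : List (Fin m)) :
    EqOn (fun z => (pderivR (m := m))^[k] (thetaDerivs α f) z.1 z.2)
      ((polarFrame m).pderivs (polarDirs k α) fun z => f z.1 z.2) W := by
  induction k with
  | zero =>
    induction α with
    | nil => exact fun z _ => rfl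
    | cons j α ih => exact pderivTheta_eqOn_pderiv (contDiffOn_pderivs hf (polarDirs 0 α)) ih j
  | succ k ih =>
    simp only [Function.iterate_succ_apply']
    exact pderivR_eqOn_pderiv (contDiffOn_pderivs hf (polarDirs k α)) ih

theorem exists_perm_polarDirs (L : List (Option (Fin m))) : ∃ k α, L.Perm (polarDirs k α) := by
  induction L with
  | nil => exact ⟨0, [], .nil⟩
  | cons i L ih =>
    obtain ⟨k, α, hL⟩ := ih
    cases i with
    | none => exact ⟨k + 1, α, hL.cons none⟩
    | some j => exact ⟨k, j :: α, (hL.cons (some j)).trans List.perm_middle.symm⟩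

theorem polarFrame_order_polarDirs (k : ℕ) (α : List (Fin m)) :
    (polarFrame m).order (polarDirs k α) = k := by
  simp [order, polarDirs, polarFrame, Function.comp_def]

theorem isBigO_pderivs_polarDirs_iff {R ν : ℝ} (hR : 1 ≤ R) {V : Opens (Fin m → ℝ)}
    (hf : ContDiffOn ℝ ∞ (fun z : ℝ × (Fin m → ℝ) => f z.1 z.2) (conicalEnd R V))
    (k : ℕ) (α : List (Fin m)) :
    ((polarFrame m).pderivs (polarDirs k α) fun z => f z.1 z.2) =O[𝓟 (conicalEnd R V : Set _)]
        (fun z => (polarFrame m).radius z ^ (-(ν + (polarFrame m).order (polarDirs k α)))) ↔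
      ∃ C > 0, ∀ r ∈ Ioi R, ∀ θ ∈ V,
        |(pderivR (m := m))^[k] (thetaDerivs α f) r θ| ≤ C * r ^ (-ν - (k : ℝ)) := by
  rw [isBigO_iff', polarFrame_order_polarDirs, neg_add']
  simp only [eventually_principal]
  refine exists_congr fun C => and_congr_right fun _ => ?_
  have hpoint (z) (hz : z ∈ conicalEnd R V) :
      ‖(polarFrame m).pderivs (polarDirs k α) (fun y => f y.1 y.2) z‖ ≤
          C * ‖(polarFrame m).radius z ^ (-ν - (k : ℝ))‖ ↔
        |(pderivR (m := m))^[k] (thetaDerivs α f) z.1 z.2| ≤ C * z.1 ^ (-ν - (k : ℝ)) := by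
    have hz0 : 0 ≤ z.1 := (zero_le_one.trans hR).trans (le_of_lt hz.1)
    rw [← pderivR_iterate_thetaDerivs_eqOn hf k α hz, polarFrame_radius_eq hR hz,
      norm_of_nonneg (rpow_nonneg hz0 _), norm_eq_abs]
  exact ⟨fun h r hr θ hθ => (hpoint (r, θ) ⟨hr, hθ⟩).1 (h _ ⟨hr, hθ⟩),
    fun h z hz => (hpoint z hz).2 (h z.1 hz.1 z.2 hz.2)⟩

theorem isSymbol_iff_decayOn {R ν : ℝ} (hR : 1 ≤ R) {V : Opens (Fin m → ℝ)} :
    IsSymbol (polarFrame m) (conicalEnd R V) (fun z => f z.1 z.2) ν ↔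
      ContDiffOn ℝ ∞ (fun z : ℝ × (Fin m → ℝ) => f z.1 z.2) (conicalEnd R V) ∧
        DecayOn f ν R V := by
  constructor
  · exact fun h => ⟨h.contDiffOn, fun k α =>
      (isBigO_pderivs_polarDirs_iff hR h.contDiffOn k α).1 (h.isBigO_pderivs _)⟩
  · refine fun ⟨hf, hdecay⟩ => ⟨hf, fun L => ?_⟩
    obtain ⟨k, α, hL⟩ := exists_perm_polarDirs L
    have horder : (polarFrame m).order L = (polarFrame m).order (polarDirs k α) :=
      (hL.map _).sum_eq
    rw [horder]
    exact ((isBigO_pderivs_polarDirs_iff hR hf k α).2 (hdecay k α)).congr'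
      (eventuallyEq_principal.2 (pderivs_perm hL hf).symm) .rfl

theorem DecayOn.mono {ν R : ℝ} {K V : Set (Fin m → ℝ)} (hf : DecayOn f ν R V) (hKV : K ⊆ V) :
    DecayOn f ν R K := fun k α => by
  obtain ⟨C, hC, hbound⟩ := hf k α
  exact ⟨C, hC, fun r hr θ hθ => hbound r hr θ (hKV hθ)⟩

theorem DecayOn.isSymbol {R ν : ℝ} {K U : Set (Fin m → ℝ)} {V : Opens (Fin m → ℝ)}
    (hdecay : DecayOn f ν R K) (hR : 1 ≤ R) (hVK : (V : Set (Fin m → ℝ)) ⊆ K) (hKU : K ⊆ U)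
    (hf : ContDiffOn ℝ ∞ (fun z : ℝ × (Fin m → ℝ) => f z.1 z.2) (Ioi R ×ˢ U)) :
    IsSymbol (polarFrame m) (conicalEnd R V) (fun z => f z.1 z.2) ν :=
  (isSymbol_iff_decayOn hR).2 ⟨hf.mono (prod_mono_right (hVK.trans hKU)), hdecay.mono hVK⟩

section Angular

variable {R : ℝ} {V : Opens (Fin m → ℝ)} {K U : Set (Fin m → ℝ)}

theorem isSymbol_comp_snd (hU : IsOpen U) (hK : IsCompact K) (hVK : (V : Set (Fin m → ℝ)) ⊆ K)
    (hKU : K ⊆ U) {φ : (Fin m → ℝ) → ℝ} (hφ : ContDiffOn ℝ ∞ φ U) :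
    IsSymbol (polarFrame m) (conicalEnd R V) (fun z => φ z.2) 0 where
  contDiffOn := hφ.comp contDiffOn_snd fun _ hz => hKU (hVK hz.2)
  isBigO_pderivs L := by
    induction L using List.reverseRecOn generalizing φ with
    | nil =>
      obtain ⟨C, hC⟩ := hK.exists_bound_of_continuousOn (hφ.continuousOn.mono hKU)
      exact isBigO_principal.2 ⟨C, fun z hz => by simpa [pderivs, order] using hC z.2 (hVK hz.2)⟩
    | append_singleton L i ih =>
      have hchain : EqOn ((polarFrame m).pderiv i fun z => φ z.2)
          (fun z => fderiv ℝ φ z.2 ((polarFrame m).dir i).2) (conicalEnd R V) := fun z hz => by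
        have hφz : DifferentiableAt ℝ φ z.2 :=
          (hφ.contDiffAt (hU.mem_nhds (hKU (hVK hz.2)))).differentiableAt (by simp)
        have hcomp := hφz.hasFDerivAt.comp z hasFDerivAt_snd
        exact congr_fun (congr_arg _ hcomp.fderiv) _
      rw [pderivs_concat]
      refine IsBigO.congr' ?_ (eventuallyEq_principal.2 (pderivs_congr hchain L).symm) .rfl
      cases i with
      | none => simpa [polarFrame, pderivs_zero] using isBigO_zero _ _
      | some j =>
        simpa [order_concat, polarFrame] using
          ih ((hφ.fderiv_of_isOpen hU (m := ∞) (by simp)).clm_apply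
            (contDiffOn_const (c := ((polarFrame m).dir (some j)).2)))

theorem isSymbolMatrix_inv_comp_snd {n : Type*} [Fintype n] [DecidableEq n]
    (hU : IsOpen U) (hK : IsCompact K) (hVK : (V : Set (Fin m → ℝ)) ⊆ K) (hKU : K ⊆ U)
    {h : (Fin m → ℝ) → Matrix n n ℝ} (hh : ∀ i j, ContDiffOn ℝ ∞ (fun θ => h θ i j) U)
    (hunit : ∀ θ ∈ U, IsUnit (h θ)) :
    IsSymbolMatrix (polarFrame m) (conicalEnd R V) (fun z => (h z.2)⁻¹) 0 := by
  have hcont : ContinuousOn (fun θ => |(h θ).det|) K :=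
    (continuous_id.matrix_det.comp_continuousOn (continuousOn_pi.2 fun i => continuousOn_pi.2
      fun j => (hh i j).continuousOn.mono hKU)).abs
  have hdet : ∀ θ ∈ K, 0 < |(h θ).det| := fun θ hθ =>
    abs_pos.2 ((Matrix.isUnit_iff_isUnit_det _).1 (hunit θ (hKU hθ))).ne_zero
  obtain ⟨c, hc, hcdet⟩ := hK.exists_forall_le' hcont hdet
  have hsymb : IsSymbolMatrix (polarFrame m) (conicalEnd R V) (fun z => h z.2) 0 :=
    fun i j => isSymbol_comp_snd hU hK hVK hKU (hh i j)
  exact hsymb.inv hc fun z hz => hcdet z.2 (hVK hz.2)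

end Angular

end PolarFrame

section BorderedMatrix

variable {n : Type*}

/-- The symmetric bordering `[[a, vᵀ], [v, N]]` of the square matrix `N`. -/
def bordered {𝕜 : Type*} (a : 𝕜) (v : n → 𝕜) (N : Matrix n n 𝕜) :
    Matrix (Fin 1 ⊕ n) (Fin 1 ⊕ n) 𝕜 :=
  Matrix.fromBlocks (Matrix.of fun _ _ => a) (Matrix.replicateRow (Fin 1) v)
    (Matrix.replicateCol (Fin 1) v) N

/-- The matrix of orders `[[α, β], [β, γ]]` of a bordered matrix. -/
def borderedOrder (α β γ : ℝ) : Fin 1 ⊕ n → Fin 1 ⊕ n → ℝ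
  | .inl _, .inl _ => α
  | .inr _, .inr _ => γ
  | _, _ => β

theorem IsSymbolMatrix.bordered {ι X : Type*} [NormedAddCommGroup X] [NormedSpace ℝ X]
    {Φ : WeightedFrame ι X} {W : Opens X} {a : X → ℝ} {v : X → n → ℝ} {N : X → Matrix n n ℝ}
    {α β γ : ℝ} (ha : IsSymbol Φ W a α) (hv : ∀ i, IsSymbol Φ W (fun z => v z i) β)
    (hN : ∀ i j, IsSymbol Φ W (fun z => N z i j) γ) :
    IsSymbolMatrix Φ W (fun z => bordered (a z) (v z) (N z)) (borderedOrder α β γ)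
  | .inl _, .inl _ => ha
  | .inl _, .inr j => hv j
  | .inr i, .inl _ => hv i
  | .inr i, .inr j => hN i j

theorem bordered_add {𝕜 : Type*} [Add 𝕜] (a a' : 𝕜) (v v' : n → 𝕜) (N N' : Matrix n n 𝕜) :
    bordered a v N + bordered a' v' N' = bordered (a + a') (v + v') (N + N') := by
  ext (_ | _) (_ | _) <;> rfl

theorem isSymm_bordered {𝕜 : Type*} {a : 𝕜} {v : n → 𝕜} {N : Matrix n n 𝕜} (hN : N.IsSymm) :
    (bordered a v N).IsSymm :=
  .fromBlocks rfl rfl hN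

theorem eq_bordered_of_isSymm {𝕜 : Type*} {B : Matrix (Fin 1 ⊕ n) (Fin 1 ⊕ n) 𝕜}
    (hB : B.IsSymm) :
    B = bordered (B (.inl 0) (.inl 0)) (fun i => B (.inr i) (.inl 0)) B.toBlocks₂₂ := by
  ext (i | i) (j | j)
  · rw [Fin.fin_one_eq_zero i, Fin.fin_one_eq_zero j]; rfl
  · rw [Fin.fin_one_eq_zero i]; exact hB.apply _ _
  · rw [Fin.fin_one_eq_zero j]; rfl
  · rfl

theorem bordered_one_zero {𝕜 : Type*} [One 𝕜] [Zero 𝕜] (h : Matrix n n 𝕜) :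
    bordered 1 0 h = Matrix.fromBlocks 1 0 0 h := by
  ext (i | _) (j | _)
  · rw [Fin.fin_one_eq_zero i, Fin.fin_one_eq_zero j]; rfl
  all_goals rfl

section Inverse

variable [Fintype n] [DecidableEq n]

theorem isUnit_bordered_one_zero {𝕜 : Type*} [CommRing 𝕜] {h : Matrix n n 𝕜} (hh : IsUnit h) :
    IsUnit (bordered 1 0 h) := by
  rw [bordered_one_zero]
  exact Matrix.isUnit_fromBlocks_zero₂₁.2 ⟨isUnit_one, hh⟩

theorem bordered_one_zero_inv {𝕜 : Type*} [CommRing 𝕜] {h : Matrix n n 𝕜} (hh : IsUnit h) :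
    (bordered 1 0 h)⁻¹ = bordered 1 0 h⁻¹ := by
  rw [bordered_one_zero, bordered_one_zero,
    Matrix.inv_fromBlocks_zero₂₁_of_isUnit_iff _ _ _ (iff_of_true isUnit_one hh)]
  simp

/-- The scaling `diag(1, r, …, r)`, which turns a metric written in the frame `∂_r, r⁻¹∂_θ` into
its coordinate expression. -/
def radialScaling {𝕜 : Type*} [One 𝕜] [Zero 𝕜] (r : 𝕜) : Matrix (Fin 1 ⊕ n) (Fin 1 ⊕ n) 𝕜 :=
  Matrix.diagonal (Sum.elim 1 fun _ => r)

theorem radialScaling_mul_bordered_mul {𝕜 : Type*} [CommSemiring 𝕜] (r a : 𝕜) (v : n → 𝕜)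
    (N : Matrix n n 𝕜) :
    radialScaling r * bordered a v N * radialScaling r = bordered a (r • v) (r ^ 2 • N) := by
  ext (i | i) (j | j) <;> simp [radialScaling, bordered, mul_comm, sq, mul_left_comm]

theorem radialScaling_mul_radialScaling_inv {𝕜 : Type*} [Field 𝕜] {r : 𝕜} (hr : r ≠ 0) :
    (radialScaling r * radialScaling r⁻¹ : Matrix (Fin 1 ⊕ n) (Fin 1 ⊕ n) 𝕜) = 1 := by
  rw [radialScaling, radialScaling, Matrix.diagonal_mul_diagonal, ← Matrix.diagonal_one]
  congr 1
  ext (_ | _) <;> simp [hr]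

theorem isUnit_and_inv_radialScaling_conj {𝕜 : Type*} [Field 𝕜] {r : 𝕜} (hr : r ≠ 0)
    {A : Matrix (Fin 1 ⊕ n) (Fin 1 ⊕ n) 𝕜} (hA : IsUnit A) :
    IsUnit (radialScaling r * A * radialScaling r) ∧
      (radialScaling r * A * radialScaling r)⁻¹ =
        radialScaling r⁻¹ * A⁻¹ * radialScaling r⁻¹ := by
  have hone := radialScaling_mul_radialScaling_inv (n := n) hr
  have hunit : IsUnit (radialScaling r : Matrix (Fin 1 ⊕ n) (Fin 1 ⊕ n) 𝕜) := .of_mul_eq_one _ hone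
  refine ⟨(hunit.mul hA).mul hunit, ?_⟩
  rw [Matrix.mul_inv_rev, Matrix.mul_inv_rev, Matrix.inv_eq_right_inv hone, Matrix.mul_assoc]

end Inverse

end BorderedMatrix

section MetricBlock

variable {m : ℕ}

/-- The perturbed metric in the frame `∂_r, r⁻¹∂_θ`, where no powers of `r` appear:
`[[1 + m⁰, (m¹)ᵀ], [m¹, h + m²]]`, split into the model metric and its perturbation. -/
def frameMetric (hM : (Fin m → ℝ) → Matrix (Fin m) (Fin m) ℝ) (m0 : ℝ → (Fin m → ℝ) → ℝ)
    (m1 : ℝ → (Fin m → ℝ) → Fin m → ℝ) (m2 : ℝ → (Fin m → ℝ) → Matrix (Fin m) (Fin m) ℝ)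
    (r : ℝ) (θ : Fin m → ℝ) : Matrix (Fin 1 ⊕ Fin m) (Fin 1 ⊕ Fin m) ℝ :=
  bordered 1 0 (hM θ) + bordered (m0 r θ) (m1 r θ) (m2 r θ)

/-- The change of the inverse metric in the frame `∂_r, r⁻¹∂_θ`; its blocks are the coefficients
`b⁰, b¹, b²` of the theorem. -/
noncomputable def inverseDefect (hM : (Fin m → ℝ) → Matrix (Fin m) (Fin m) ℝ)
    (m0 : ℝ → (Fin m → ℝ) → ℝ) (m1 : ℝ → (Fin m → ℝ) → Fin m → ℝ)
    (m2 : ℝ → (Fin m → ℝ) → Matrix (Fin m) (Fin m) ℝ) (r : ℝ) (θ : Fin m → ℝ) :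
    Matrix (Fin 1 ⊕ Fin m) (Fin 1 ⊕ Fin m) ℝ :=
  (frameMetric hM m0 m1 m2 r θ)⁻¹ - (bordered 1 0 (hM θ))⁻¹

variable {hM : (Fin m → ℝ) → Matrix (Fin m) (Fin m) ℝ} {m0 : ℝ → (Fin m → ℝ) → ℝ}
  {m1 : ℝ → (Fin m → ℝ) → Fin m → ℝ} {m2 : ℝ → (Fin m → ℝ) → Matrix (Fin m) (Fin m) ℝ}
  {r : ℝ} {θ : Fin m → ℝ}

theorem isSymm_inverseDefect (hMsymm : (hM θ).IsSymm) (hm2symm : (m2 r θ).IsSymm) :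
    (inverseDefect hM m0 m1 m2 r θ).IsSymm :=
  ((isSymm_bordered hMsymm).add (isSymm_bordered hm2symm)).inv.sub (isSymm_bordered hMsymm).inv

theorem metricBlock_eq :
    metricBlock hM m0 m1 m2 r θ =
      radialScaling r * frameMetric hM m0 m1 m2 r θ * radialScaling r := by
  rw [frameMetric, bordered_add, radialScaling_mul_bordered_mul, zero_add]
  rfl

theorem inverseBlock_eq (hunit : IsUnit (hM θ)) :
    inverseBlock hM m0 m1 m2 r θ =
      radialScaling r⁻¹ * ((bordered 1 0 (hM θ))⁻¹ + bordered (m0 r θ) (m1 r θ) (m2 r θ)) *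
        radialScaling r⁻¹ := by
  rw [bordered_one_zero_inv hunit, bordered_add, radialScaling_mul_bordered_mul, zero_add, inv_pow]
  rfl

theorem isUnit_metricBlock_and_inv (hr : r ≠ 0) (hunit : IsUnit (hM θ)) (hMsymm : (hM θ).IsSymm)
    (hm2symm : (m2 r θ).IsSymm) (hframe : IsUnit (frameMetric hM m0 m1 m2 r θ)) :
    IsUnit (metricBlock hM m0 m1 m2 r θ) ∧
      (metricBlock hM m0 m1 m2 r θ)⁻¹ =
        inverseBlock hM (fun r θ => inverseDefect hM m0 m1 m2 r θ (.inl 0) (.inl 0))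
          (fun r θ i => inverseDefect hM m0 m1 m2 r θ (.inr i) (.inl 0))
          (fun r θ => (inverseDefect hM m0 m1 m2 r θ).toBlocks₂₂) r θ := by
  rw [metricBlock_eq, inverseBlock_eq hunit,
    ← eq_bordered_of_isSymm (isSymm_inverseDefect hMsymm hm2symm), inverseDefect, add_sub_cancel]
  exact isUnit_and_inv_radialScaling_conj hr hframe

theorem exists_isSymbolMatrix_inverseDefect {μ : ℝ} (hμ : 0 < μ) {U K : Set (Fin m → ℝ)}
    {V : Opens (Fin m → ℝ)} (hU : IsOpen U) (hK : IsCompact K)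
    (hVK : (V : Set (Fin m → ℝ)) ⊆ K) (hKU : K ⊆ U)
    (hM_smooth : ∀ j k, ContDiffOn ℝ ∞ (fun θ => hM θ j k) U) (hM_unit : ∀ θ ∈ U, IsUnit (hM θ))
    (hm0 : IsSymbol (polarFrame m) (conicalEnd 1 V) (fun z => m0 z.1 z.2) (1 + μ))
    (hm1 : ∀ j, IsSymbol (polarFrame m) (conicalEnd 1 V) (fun z => m1 z.1 z.2 j) ((1 + μ) / 2))
    (hm2 : ∀ j k, IsSymbol (polarFrame m) (conicalEnd 1 V) (fun z => m2 z.1 z.2 j k) μ) :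
    ∃ R ≥ 1, (∀ z ∈ conicalEnd R V, IsUnit (frameMetric hM m0 m1 m2 z.1 z.2)) ∧
      IsSymbolMatrix (polarFrame m) (conicalEnd R V) (fun z => inverseDefect hM m0 m1 m2 z.1 z.2)
        (borderedOrder (1 + μ) ((1 + μ) / 2) μ) := by
  have hunit : ∀ z ∈ conicalEnd 1 V, IsUnit (hM z.2) := fun z hz => hM_unit _ (hKU (hVK hz.2))
  -- The zero border of `h⁻¹` is a symbol of every order; `1 + μ` is large enough below.
  have hmodel : IsSymbolMatrix (polarFrame m) (conicalEnd 1 V)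
      (fun z => (bordered 1 0 (hM z.2))⁻¹) (borderedOrder 0 (1 + μ) 0) :=
    (IsSymbolMatrix.bordered (v := 0) (.const 1) (fun _ => .zero)
      (isSymbolMatrix_inv_comp_snd hU hK hVK hKU hM_smooth hM_unit)).congr
      fun z hz => (bordered_one_zero_inv (hunit z hz)).symm
  obtain ⟨R, hR⟩ := IsSymbolMatrix.exists_isUnit_add_and_inv_sub_inv
    (fun z hz => isUnit_bordered_one_zero (hunit z hz)) hmodel (.bordered hm0 hm1 hm2)
    (by rintro (_ | _) (_ | _) <;> simp only [borderedOrder] <;> linarith)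
    (by rintro (_ | _) (_ | _) (_ | _) <;> simp only [borderedOrder] <;> linarith)
    (by rintro (_ | _) (_ | _) (_ | _) <;> simp only [borderedOrder] <;> linarith)
    (by rintro (_ | _) (_ | _) (_ | _) (_ | _) <;> simp only [borderedOrder] <;> linarith)
  refine ⟨max 1 R, le_max_left _ _, hR _ (conicalEnd_anti (le_max_left _ _) V) fun z hz => ?_⟩
  rw [polarFrame_radius_eq (le_max_left _ _) hz]
  exact (le_max_right _ _).trans_lt hz.1

end MetricBlock

theorem statement_0_general {m : ℕ} {μ : ℝ} (hμ : 0 < μ) {U : Set (Fin m → ℝ)} (hU : IsOpen U)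
    (hM : (Fin m → ℝ) → Matrix (Fin m) (Fin m) ℝ)
    (hM_smooth : ∀ j k, ContDiffOn ℝ ∞ (fun θ => hM θ j k) U)
    (hM_symm : ∀ θ ∈ U, (hM θ).IsSymm)
    (hM_unit : ∀ θ ∈ U, IsUnit (hM θ))
    (m0 : ℝ → (Fin m → ℝ) → ℝ) (m1 : ℝ → (Fin m → ℝ) → Fin m → ℝ)
    (m2 : ℝ → (Fin m → ℝ) → Matrix (Fin m) (Fin m) ℝ)
    (hm0s : ContDiffOn ℝ ∞ (fun z : ℝ × (Fin m → ℝ) => m0 z.1 z.2) (Ioi 1 ×ˢ U))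
    (hm1s : ∀ j, ContDiffOn ℝ ∞ (fun z : ℝ × (Fin m → ℝ) => m1 z.1 z.2 j) (Ioi 1 ×ˢ U))
    (hm2s : ∀ j k, ContDiffOn ℝ ∞ (fun z : ℝ × (Fin m → ℝ) => m2 z.1 z.2 j k) (Ioi 1 ×ˢ U))
    (hm2symm : ∀ r ∈ Ioi (1 : ℝ), ∀ θ ∈ U, (m2 r θ).IsSymm)
    (hm0d : ∀ K : Set (Fin m → ℝ), IsCompact K → K ⊆ U → DecayOn m0 (1 + μ) 1 K)
    (hm1d : ∀ K : Set (Fin m → ℝ), IsCompact K → K ⊆ U →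
      ∀ j, DecayOn (fun r θ => m1 r θ j) ((1 + μ) / 2) 1 K)
    (hm2d : ∀ K : Set (Fin m → ℝ), IsCompact K → K ⊆ U →
      ∀ j k, DecayOn (fun r θ => m2 r θ j k) μ 1 K)
    (K : Set (Fin m → ℝ)) (hK : IsCompact K) (hKU : K ⊆ U) :
    ∃ R ≥ (1 : ℝ), ∃ (b0 : ℝ → (Fin m → ℝ) → ℝ) (b1 : ℝ → (Fin m → ℝ) → Fin m → ℝ)
      (b2 : ℝ → (Fin m → ℝ) → Matrix (Fin m) (Fin m) ℝ),
      ContDiffOn ℝ ∞ (fun z : ℝ × (Fin m → ℝ) => b0 z.1 z.2) (Ioi R ×ˢ K) ∧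
      (∀ j, ContDiffOn ℝ ∞ (fun z : ℝ × (Fin m → ℝ) => b1 z.1 z.2 j) (Ioi R ×ˢ K)) ∧
      (∀ j k, ContDiffOn ℝ ∞ (fun z : ℝ × (Fin m → ℝ) => b2 z.1 z.2 j k) (Ioi R ×ˢ K)) ∧
      DecayOn b0 (1 + μ) R K ∧
      (∀ j, DecayOn (fun r θ => b1 r θ j) ((1 + μ) / 2) R K) ∧
      (∀ j k, DecayOn (fun r θ => b2 r θ j k) μ R K) ∧
      ∀ r ∈ Ioi R, ∀ θ ∈ K,
        IsUnit (metricBlock hM m0 m1 m2 r θ) ∧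
        (metricBlock hM m0 m1 m2 r θ)⁻¹ = inverseBlock hM b0 b1 b2 r θ := by
  obtain ⟨K', hK', hKK', hK'U⟩ := exists_compact_between hK hU hKU
  let V : Opens (Fin m → ℝ) := ⟨interior K', isOpen_interior⟩
  have hVK' : (V : Set (Fin m → ℝ)) ⊆ K' := interior_subset
  obtain ⟨R, hR, hframe, hB⟩ := exists_isSymbolMatrix_inverseDefect hμ hU hK' hVK' hK'U hM_smooth
    hM_unit ((hm0d K' hK' hK'U).isSymbol le_rfl hVK' hK'U hm0s)
    (fun j => (hm1d K' hK' hK'U j).isSymbol le_rfl hVK' hK'U (hm1s j))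
    (fun j k => (hm2d K' hK' hK'U j k).isSymbol le_rfl hVK' hK'U (hm2s j k))
  have hsmooth (a b) : ContDiffOn ℝ ∞ (fun z : ℝ × (Fin m → ℝ) =>
      inverseDefect hM m0 m1 m2 z.1 z.2 a b) (Ioi R ×ˢ K) :=
    (hB a b).contDiffOn.mono (prod_mono_right hKK')
  have hdecay (a b) : DecayOn (fun r θ => inverseDefect hM m0 m1 m2 r θ a b)
      (borderedOrder (1 + μ) ((1 + μ) / 2) μ a b) R K :=
    ((isSymbol_iff_decayOn hR).1 (hB a b)).2.mono hKK'
  refine ⟨R, hR, fun r θ => inverseDefect hM m0 m1 m2 r θ (.inl 0) (.inl 0),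
    fun r θ i => inverseDefect hM m0 m1 m2 r θ (.inr i) (.inl 0),
    fun r θ => (inverseDefect hM m0 m1 m2 r θ).toBlocks₂₂,
    hsmooth (.inl 0) (.inl 0), fun j => hsmooth (.inr j) (.inl 0),
    fun j k => hsmooth (.inr j) (.inr k), hdecay (.inl 0) (.inl 0),
    fun j => hdecay (.inr j) (.inl 0), fun j k => hdecay (.inr j) (.inr k), fun r hr θ hθ => ?_⟩
  exact isUnit_metricBlock_and_inv (by linarith [mem_Ioi.1 hr]) (hM_unit θ (hKU hθ))
    (hM_symm θ (hKU hθ)) (hm2symm r (hR.trans_lt hr) θ (hKU hθ)) (hframe (r, θ) ⟨hr, hKK' hθ⟩)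

/-- The metric block matrix `G(r,θ)` of a short-range scattering metric
is, for `r` large (locally uniformly in `θ`), invertible, and its inverse has the block
form `[[1 + b⁰, r⁻¹(b¹)ᵀ], [r⁻¹b¹, r⁻²(h⁻¹ + b²)]]` with `b⁰, b¹, b²` smooth and
satisfying the same decay estimates as `m⁰, m¹, m²`. -/
theorem statement_0 {m : ℕ} (hm : 1 ≤ m) {μ : ℝ} (hμ : μ ∈ Ioo (0:ℝ) 1)
    {U : Set (Fin m → ℝ)} (hU : IsOpen U)
    (hM : (Fin m → ℝ) → Matrix (Fin m) (Fin m) ℝ)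
    (hM_smooth : ∀ j k, ContDiffOn ℝ (⊤ : ℕ∞) (fun θ => hM θ j k) U)
    (hM_symm : ∀ θ ∈ U, (hM θ).IsSymm)
    (hM_posdef : ∀ θ ∈ U, (hM θ).PosDef)
    (m0 : ℝ → (Fin m → ℝ) → ℝ) (m1 : ℝ → (Fin m → ℝ) → Fin m → ℝ)
    (m2 : ℝ → (Fin m → ℝ) → Matrix (Fin m) (Fin m) ℝ)
    (hm0s : ContDiffOn ℝ (⊤ : ℕ∞) (fun z : ℝ × (Fin m → ℝ) => m0 z.1 z.2) (Ioi (1:ℝ) ×ˢ U))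
    (hm1s : ∀ j, ContDiffOn ℝ (⊤ : ℕ∞) (fun z : ℝ × (Fin m → ℝ) => m1 z.1 z.2 j) (Ioi (1:ℝ) ×ˢ U))
    (hm2s : ∀ j k, ContDiffOn ℝ (⊤ : ℕ∞) (fun z : ℝ × (Fin m → ℝ) => m2 z.1 z.2 j k)
      (Ioi (1:ℝ) ×ˢ U))
    (hm2symm : ∀ r θ j k, m2 r θ j k = m2 r θ k j)
    (hm0d : ∀ K : Set (Fin m → ℝ), IsCompact K → K ⊆ U → DecayOn m0 (1 + μ) 1 K)
    (hm1d : ∀ K : Set (Fin m → ℝ), IsCompact K → K ⊆ U →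
      ∀ j, DecayOn (fun r θ => m1 r θ j) ((1 + μ)/2) 1 K)
    (hm2d : ∀ K : Set (Fin m → ℝ), IsCompact K → K ⊆ U →
      ∀ j k, DecayOn (fun r θ => m2 r θ j k) μ 1 K)
    (K : Set (Fin m → ℝ)) (hK : IsCompact K) (hKU : K ⊆ U) :
    ∃ R ≥ (1:ℝ), ∃ (b0 : ℝ → (Fin m → ℝ) → ℝ) (b1 : ℝ → (Fin m → ℝ) → Fin m → ℝ)
      (b2 : ℝ → (Fin m → ℝ) → Matrix (Fin m) (Fin m) ℝ),
      ContDiffOn ℝ (⊤ : ℕ∞) (fun z : ℝ × (Fin m → ℝ) => b0 z.1 z.2) (Ioi R ×ˢ K) ∧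
      (∀ j, ContDiffOn ℝ (⊤ : ℕ∞) (fun z : ℝ × (Fin m → ℝ) => b1 z.1 z.2 j) (Ioi R ×ˢ K)) ∧
      (∀ j k, ContDiffOn ℝ (⊤ : ℕ∞) (fun z : ℝ × (Fin m → ℝ) => b2 z.1 z.2 j k) (Ioi R ×ˢ K)) ∧
      DecayOn b0 (1 + μ) R K ∧
      (∀ j, DecayOn (fun r θ => b1 r θ j) ((1 + μ)/2) R K) ∧
      (∀ j k, DecayOn (fun r θ => b2 r θ j k) μ R K) ∧
      ∀ r ∈ Ioi R, ∀ θ ∈ K,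
        IsUnit (metricBlock hM m0 m1 m2 r θ) ∧
        (metricBlock hM m0 m1 m2 r θ)⁻¹ = inverseBlock hM b0 b1 b2 r θ := by
  exact statement_0_general hμ.1 hU hM hM_smooth hM_symm (fun θ hθ => (hM_posdef θ hθ).isUnit)
    m0 m1 m2 hm0s hm1s hm2s (fun r _ θ _ => .ext fun j k => hm2symm r θ k j) hm0d hm1d hm2d K hK hKU

end Scattering
end

section
/- For every compact K ⊆ U and every C₀ > 0 there exist R ≥ 1 and C > 0 such that: if (r(t),θ(t),ρ(t),ω(t)) is a solution of the Hamiltonian system with energy p₀, then at every time t at which r(t) ≥ R, θ(t) ∈ K, |ρ(t)| ≤ C₀ and |ω(t)| ≤ C₀·r(t), one has |(d²/dt²)(r(t)²) − 8p₀| ≤ C·r(t)^{-μ}. -/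
open Real Set Filter Topology

namespace Scattering

/-!
Write `η = ω / r` and let `D f` be the differential of a function on phase space in the scaled
directions `r ∂_r, ∂_θ, ∂_ρ, r ∂_ω`. The functions `f` with `f` and `D f` both `O(w)` form a
symbol class that is closed under sums and under products with bounded symbols, and on the region
in question it contains `ρ`, `η_j`, `h^{jk}` (with `w = 1`) and `a₀, a₁, a₂` (with `w = r^{-μ}`).

In the scaled directions `r` times the Hamiltonian field is `X = (p_ρ, r p_ω, -r p_r, -p_θ)`, whose
entries are up to sign those of `D p`; hence `D p = O(1)` gives `X = O(1)`. Split `p = p_free + V`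
with `p_free = ρ² + h(η, η)`; then `p_ρ = 2ρ + W` with `W = V_ρ`, and
`-r ∂_r p_free = 2 h(η, η)`, so
`d²(r²)/dt² = 2 (p_ρ² + D p_ρ · X) = 8 p + 8ρW + 2W² - 8V - 4 r V_r + 2 D W · X`.
As `V` and `W` are symbols of size `r^{-μ}`, so is the remainder.
-/

section Asymptotics

open Asymptotics

theorem isBigO_clm_of_forall_apply {α 𝕜 E F G : Type*} [NontriviallyNormedField 𝕜]
    [CompleteSpace 𝕜] [NormedAddCommGroup E] [NormedSpace 𝕜 E] [FiniteDimensional 𝕜 E]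
    [NormedAddCommGroup F] [NormedSpace 𝕜 F] [Norm G] {l : Filter α} {L : α → E →L[𝕜] F}
    {w : α → G} (h : ∀ v, (fun x => L x v) =O[l] w) : L =O[l] w := by
  let b := Module.finBasis 𝕜 E
  obtain ⟨C, -, hC⟩ := b.exists_opNorm_le (F := F)
  have norm_le_sum : L =O[l] fun x => ∑ i, ‖L x (b i)‖ := by
    refine IsBigO.of_bound C (Eventually.of_forall fun x => ?_)
    have sum_nonneg : 0 ≤ ∑ i, ‖L x (b i)‖ := Finset.sum_nonneg fun i _ => norm_nonneg _
    rw [Real.norm_of_nonneg sum_nonneg]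
    exact hC sum_nonneg fun i => Finset.single_le_sum
      (f := fun i => ‖L x (b i)‖) (fun i _ => norm_nonneg _) (Finset.mem_univ i)
  exact norm_le_sum.trans (IsBigO.fun_sum fun i _ => (h (b i)).norm_left)

theorem isBigO_clm_apply_bounded {α 𝕜 E F : Type*} [NontriviallyNormedField 𝕜]
    [NormedAddCommGroup E] [NormedSpace 𝕜 E] [NormedAddCommGroup F] [NormedSpace 𝕜 F]
    {l : Filter α} {L : α → E →L[𝕜] F} {v : α → E} {w : α → ℝ} (hL : L =O[l] w)
    (hv : v =O[l] (1 : α → ℝ)) : (fun x => L x (v x)) =O[l] w := by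
  have hLv : (fun x => L x (v x)) =O[l] fun x => ‖L x‖ * ‖v x‖ :=
    isBoundedBilinearMap_apply.isBigO_comp (g := L) (h := v)
  simpa using hLv.trans (hL.norm_left.mul hv.norm_left)

theorem isBigO_mul_bounded {α : Type*} {l : Filter α} {f g w : α → ℝ} (hf : f =O[l] w)
    (hg : g =O[l] (1 : α → ℝ)) : (fun x => f x * g x) =O[l] w := by
  simpa using hf.mul hg

end Asymptotics

section ScaledDifferential

variable {m : ℕ} {f g : Phase m → ℝ} {x : Phase m}

/-- The linear map `(r', θ', ρ', ω') ↦ (s r', θ', ρ', s ω')` of phase space, which at a point with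
radial coordinate `s` sends the coordinate directions to `s ∂_r, ∂_θ, ∂_ρ, s ∂_ω`. -/
noncomputable def dilation (s : ℝ) : Phase m →L[ℝ] Phase m :=
  (s • ContinuousLinearMap.id ℝ ℝ).prodMap ((ContinuousLinearMap.id ℝ (Fin m → ℝ)).prodMap
    ((ContinuousLinearMap.id ℝ ℝ).prodMap (s • ContinuousLinearMap.id ℝ (Fin m → ℝ))))

theorem dilation_apply (s : ℝ) (v : Phase m) :
    dilation s v = (s * v.1, v.2.1, v.2.2.1, s • v.2.2.2) := rfl

/-- The differential of `f` in the scaled directions `r ∂_r, ∂_θ, ∂_ρ, r ∂_ω`. -/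
noncomputable def scaledFDeriv (f : Phase m → ℝ) (x : Phase m) : Phase m →L[ℝ] ℝ :=
  (fderiv ℝ f x).comp (dilation x.1)

theorem scaledFDeriv_apply (v : Phase m) :
    scaledFDeriv f x v = fderiv ℝ f x (x.1 * v.1, v.2.1, v.2.2.1, x.1 • v.2.2.2) := rfl

theorem scaledFDeriv_add (hf : DifferentiableAt ℝ f x) (hg : DifferentiableAt ℝ g x) :
    scaledFDeriv (fun y => f y + g y) x = scaledFDeriv f x + scaledFDeriv g x := by
  rw [scaledFDeriv, fderiv_fun_add hf hg, ContinuousLinearMap.add_comp]; rfl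

theorem scaledFDeriv_mul (hf : DifferentiableAt ℝ f x) (hg : DifferentiableAt ℝ g x) :
    scaledFDeriv (fun y => f y * g y) x = f x • scaledFDeriv g x + g x • scaledFDeriv f x := by
  rw [scaledFDeriv, fderiv_fun_mul hf hg, ContinuousLinearMap.add_comp,
    ContinuousLinearMap.smul_comp, ContinuousLinearMap.smul_comp]; rfl

theorem scaledFDeriv_const_mul (hf : DifferentiableAt ℝ f x) (a : ℝ) :
    scaledFDeriv (fun y => a * f y) x = a • scaledFDeriv f x := by
  rw [scaledFDeriv, fderiv_const_mul hf, ContinuousLinearMap.smul_comp]; rfl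

theorem scaledFDeriv_sum {ι : Type*} {s : Finset ι} {f : ι → Phase m → ℝ}
    (hf : ∀ i ∈ s, DifferentiableAt ℝ (f i) x) :
    scaledFDeriv (fun y => ∑ i ∈ s, f i y) x = ∑ i ∈ s, scaledFDeriv (f i) x := by
  refine ContinuousLinearMap.ext fun v => ?_
  simp only [scaledFDeriv_apply, fderiv_fun_sum hf, _root_.sum_apply]

theorem scaledFDeriv_radial (hf : DifferentiableAt ℝ f x) :
    scaledFDeriv f x (1, 0, 0, 0) = x.1 * deriv (fun s => f (s, x.2)) x.1 := by
  have slice : HasDerivAt (fun s => ((s, x.2) : Phase m)) (1, 0, 0, 0) x.1 :=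
    (hasDerivAt_id x.1).prodMk (hasDerivAt_const x.1 x.2)
  have chain : HasDerivAt (fun s => f (s, x.2)) (fderiv ℝ f x (1, 0, 0, 0)) x.1 :=
    hf.hasFDerivAt.comp_hasDerivAt (f := fun s => (s, x.2)) x.1 slice
  rw [chain.deriv, scaledFDeriv_apply, ← smul_eq_mul x.1 (fderiv _ _ _ _), ← map_smul]
  simp

theorem scaledFDeriv_rho_apply (x v : Phase m) :
    scaledFDeriv (fun y : Phase m => y.2.2.1) x v = v.2.2.1 := by
  let ρ : Phase m →L[ℝ] ℝ := .fst ℝ ℝ (Fin m → ℝ) ∘L .snd ℝ (Fin m → ℝ) _ ∘L .snd ℝ ℝ _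
  have : HasFDerivAt (fun y : Phase m => y.2.2.1) ρ x := ρ.hasFDerivAt
  rw [scaledFDeriv_apply, this.fderiv]
  rfl

theorem scaledFDeriv_eta_apply (j : Fin m) (hx : x.1 ≠ 0) (v : Phase m) :
    scaledFDeriv (fun y : Phase m => y.2.2.2 j / y.1) x v =
      v.2.2.2 j - x.2.2.2 j / x.1 * v.1 := by
  let ω : Phase m →L[ℝ] ℝ := .proj j ∘L .snd ℝ ℝ _ ∘L .snd ℝ (Fin m → ℝ) _ ∘L .snd ℝ ℝ _
  have hη : HasFDerivAt (fun y : Phase m => y.2.2.2 j / y.1) _ x :=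
    ω.hasFDerivAt.mul ((hasDerivAt_inv hx).comp_hasFDerivAt x hasFDerivAt_fst)
  rw [scaledFDeriv_apply, hη.fderiv]
  simp only [ContinuousLinearMap.comp_apply, ContinuousLinearMap.coe_snd', neg_smul, smul_neg,
    ContinuousLinearMap.proj_apply, _root_.add_apply, _root_.neg_apply, _root_.smul_apply,
    ContinuousLinearMap.coe_fst', smul_eq_mul, map_smul, ω]
  field_simp
  ring

end ScaledDifferential

section Symbols

open Asymptotics

variable {m : ℕ} {S : Set (Phase m)} {v w f g : Phase m → ℝ}

/-- `f` is a symbol of size `w` on `S`: it is differentiable at the points of `S`, and both `f` and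
its differential in the scaled directions are bounded there by a multiple of `w`. -/
structure IsSymbolOn (S : Set (Phase m)) (w f : Phase m → ℝ) : Prop where
  differentiableAt : ∀ x ∈ S, DifferentiableAt ℝ f x
  isBigO : f =O[𝓟 S] w
  isBigO_scaledFDeriv : scaledFDeriv f =O[𝓟 S] w

namespace IsSymbolOn

theorem of_isBigO_apply (hd : ∀ x ∈ S, DifferentiableAt ℝ f x) (hf : f =O[𝓟 S] w)
    {f' : Phase m → Phase m → ℝ} (hf' : ∀ x ∈ S, ∀ u, scaledFDeriv f x u = f' x u)
    (hO : ∀ u, (fun x => f' x u) =O[𝓟 S] w) : IsSymbolOn S w f where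
  differentiableAt := hd
  isBigO := hf
  isBigO_scaledFDeriv := isBigO_clm_of_forall_apply fun u =>
    (hO u).congr' (eventually_principal.2 fun x hx => (hf' x hx u).symm) .rfl

theorem mono (hf : IsSymbolOn S v f) (hvw : v =O[𝓟 S] w) : IsSymbolOn S w f :=
  ⟨hf.differentiableAt, hf.isBigO.trans hvw, hf.isBigO_scaledFDeriv.trans hvw⟩

theorem add (hf : IsSymbolOn S w f) (hg : IsSymbolOn S w g) :
    IsSymbolOn S w fun x => f x + g x where
  differentiableAt x hx := (hf.differentiableAt x hx).add (hg.differentiableAt x hx)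
  isBigO := hf.isBigO.add hg.isBigO
  isBigO_scaledFDeriv :=
    (hf.isBigO_scaledFDeriv.add hg.isBigO_scaledFDeriv).congr' (eventually_principal.2 fun x hx =>
      (scaledFDeriv_add (hf.differentiableAt x hx) (hg.differentiableAt x hx)).symm) .rfl

theorem mul (hf : IsSymbolOn S v f) (hg : IsSymbolOn S w g) :
    IsSymbolOn S (fun x => v x * w x) fun x => f x * g x where
  differentiableAt x hx := (hf.differentiableAt x hx).mul (hg.differentiableAt x hx)
  isBigO := hf.isBigO.mul hg.isBigO
  isBigO_scaledFDeriv := by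
    have hfg' : (fun x => f x • scaledFDeriv g x) =O[𝓟 S] fun x => v x * w x :=
      hf.isBigO.smul hg.isBigO_scaledFDeriv
    have hf'g : (fun x => g x • scaledFDeriv f x) =O[𝓟 S] fun x => v x * w x := by
      simpa only [smul_eq_mul, mul_comm] using hg.isBigO.smul hf.isBigO_scaledFDeriv
    exact (hfg'.add hf'g).congr' (eventually_principal.2 fun x hx =>
      (scaledFDeriv_mul (hf.differentiableAt x hx) (hg.differentiableAt x hx)).symm) .rfl

theorem mul_bounded (hf : IsSymbolOn S w f) (hg : IsSymbolOn S 1 g) :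
    IsSymbolOn S w fun x => f x * g x := by
  simpa using hf.mul hg

theorem const_mul (hf : IsSymbolOn S w f) (a : ℝ) : IsSymbolOn S w fun x => a * f x where
  differentiableAt x hx := (hf.differentiableAt x hx).const_mul a
  isBigO := hf.isBigO.const_mul_left a
  isBigO_scaledFDeriv :=
    (hf.isBigO_scaledFDeriv.const_smul_left a).congr' (eventually_principal.2 fun x hx =>
      (scaledFDeriv_const_mul (hf.differentiableAt x hx) a).symm) .rfl

theorem sum {ι : Type*} {s : Finset ι} {f : ι → Phase m → ℝ} (hf : ∀ i ∈ s, IsSymbolOn S w (f i)) :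
    IsSymbolOn S w fun x => ∑ i ∈ s, f i x where
  differentiableAt x hx := .fun_sum fun i hi => (hf i hi).differentiableAt x hx
  isBigO := .fun_sum fun i hi => (hf i hi).isBigO
  isBigO_scaledFDeriv :=
    (IsBigO.fun_sum fun i hi => (hf i hi).isBigO_scaledFDeriv).congr'
      (eventually_principal.2 fun x hx =>
        (scaledFDeriv_sum fun i hi => (hf i hi).differentiableAt x hx).symm) .rfl

theorem rho (hρ : (fun x => x.2.2.1) =O[𝓟 S] (1 : Phase m → ℝ)) :
    IsSymbolOn S 1 fun x => x.2.2.1 :=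
  of_isBigO_apply (fun x _ => by fun_prop) hρ (fun x _ => scaledFDeriv_rho_apply x)
    fun u => isBigO_const_one ℝ u.2.2.1 _

theorem eta {j : Fin m} (hS : ∀ x ∈ S, x.1 ≠ 0)
    (hη : (fun x => x.2.2.2 j / x.1) =O[𝓟 S] (1 : Phase m → ℝ)) :
    IsSymbolOn S 1 fun x => x.2.2.2 j / x.1 := by
  refine of_isBigO_apply (fun x hx => ?_) hη
    (fun x hx => scaledFDeriv_eta_apply j (hS x hx)) fun u => ?_
  · have hr := hS x hx
    fun_prop (disch := exact hr)
  · exact (isBigO_const_one ℝ (u.2.2.2 j) _).sub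
      (isBigO_mul_bounded hη (isBigO_const_one ℝ u.1 _))

end IsSymbolOn

theorem fderiv_uncurry_apply {f : ℝ → (Fin m → ℝ) → ℝ} {z : ℝ × (Fin m → ℝ)}
    (hf : DifferentiableAt ℝ (fun z : ℝ × (Fin m → ℝ) => f z.1 z.2) z) (u : ℝ × (Fin m → ℝ)) :
    fderiv ℝ (fun z : ℝ × (Fin m → ℝ) => f z.1 z.2) z u =
      pderivR f z.1 z.2 * u.1 + ∑ j, pderivTheta j f z.1 z.2 * u.2 j := by
  set L := fderiv ℝ (fun z : ℝ × (Fin m → ℝ) => f z.1 z.2) z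
  have radial : HasDerivAt (fun s => f s z.2) (L (1, 0)) z.1 :=
    hf.hasFDerivAt.comp_hasDerivAt (f := fun s => (s, z.2)) z.1
      ((hasDerivAt_id z.1).prodMk (hasDerivAt_const z.1 z.2))
  have angular : HasFDerivAt (f z.1) (L ∘L .inr ℝ ℝ (Fin m → ℝ)) z.2 :=
    HasFDerivAt.comp (f := fun θ => (z.1, θ)) z.2 hf.hasFDerivAt (hasFDerivAt_prodMk_right z.1 z.2)
  have decomposition : u = u.1 • (1, 0) + ∑ j, u.2 j • (0, Pi.single j 1) := by
    ext i <;> simp [Prod.fst_sum, Prod.snd_sum, Pi.single_apply]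
  calc L u = L (u.1 • (1, 0) + ∑ j, u.2 j • (0, Pi.single j 1)) := congrArg L decomposition
    _ = u.1 * L (1, 0) + ∑ j, u.2 j * L (0, Pi.single j 1) := by
      simp only [map_add, map_sum, map_smul, smul_eq_mul]
    _ = _ := by
      simp only [pderivR, pderivTheta, radial.deriv, angular.fderiv, mul_comm,
        ContinuousLinearMap.comp_apply, ContinuousLinearMap.inr_apply]

theorem scaledFDeriv_comp_base_apply {f : ℝ → (Fin m → ℝ) → ℝ} {x : Phase m}
    (hf : DifferentiableAt ℝ (fun z : ℝ × (Fin m → ℝ) => f z.1 z.2) (x.1, x.2.1)) (u : Phase m) :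
    scaledFDeriv (fun y => f y.1 y.2.1) x u =
      x.1 * pderivR f x.1 x.2.1 * u.1 + ∑ j, pderivTheta j f x.1 x.2.1 * u.2.1 j := by
  let base : Phase m →L[ℝ] ℝ × (Fin m → ℝ) :=
    (ContinuousLinearMap.fst ℝ ℝ _).prod (.fst ℝ (Fin m → ℝ) _ ∘L .snd ℝ ℝ _)
  have chain : HasFDerivAt (fun y : Phase m => f y.1 y.2.1) _ x :=
    HasFDerivAt.comp x (f := base) hf.hasFDerivAt base.hasFDerivAt
  rw [scaledFDeriv_apply, chain.fderiv, ContinuousLinearMap.comp_apply, fderiv_uncurry_apply hf]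
  change pderivR f x.1 x.2.1 * (x.1 * u.1) + ∑ j, pderivTheta j f x.1 x.2.1 * u.2.1 j = _
  ring

theorem IsSymbolOn.comp_base {f : ℝ → (Fin m → ℝ) → ℝ}
    (hd : ∀ x ∈ S, DifferentiableAt ℝ (fun z : ℝ × (Fin m → ℝ) => f z.1 z.2) (x.1, x.2.1))
    (hf : (fun x => f x.1 x.2.1) =O[𝓟 S] w)
    (hr : (fun x => x.1 * pderivR f x.1 x.2.1) =O[𝓟 S] w)
    (hθ : ∀ j, (fun x => pderivTheta j f x.1 x.2.1) =O[𝓟 S] w) :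
    IsSymbolOn S w fun x => f x.1 x.2.1 := by
  refine of_isBigO_apply (fun x hx => ?_) hf
    (fun x hx => scaledFDeriv_comp_base_apply (hd x hx)) fun u => ?_
  · exact DifferentiableAt.comp (f := fun y : Phase m => (y.1, y.2.1)) x (hd x hx) (by fun_prop)
  · exact (isBigO_mul_bounded hr (isBigO_const_one ℝ _ _)).add
      (.fun_sum fun j _ => isBigO_mul_bounded (hθ j) (isBigO_const_one ℝ _ _))

end Symbols

section Hamiltonian

open Asymptotics

variable {m : ℕ} {p : ℝ → (Fin m → ℝ) → ℝ → (Fin m → ℝ) → ℝ} {x : Phase m}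

/-- A function of the coordinates `(r, θ, ρ, ω)` as a function on phase space. -/
def onPhase (p : ℝ → (Fin m → ℝ) → ℝ → (Fin m → ℝ) → ℝ) (x : Phase m) : ℝ :=
  p x.1 x.2.1 x.2.2.1 x.2.2.2

theorem mul_pdR_eq_scaledFDeriv (hp : DifferentiableAt ℝ (onPhase p) x) :
    x.1 * onPhase (pdR p) x = scaledFDeriv (onPhase p) x (1, 0, 0, 0) :=
  (scaledFDeriv_radial hp).symm

theorem pdTheta_eq_scaledFDeriv (hp : DifferentiableAt ℝ (onPhase p) x) (j : Fin m) :
    onPhase (pdTheta p j) x = scaledFDeriv (onPhase p) x (0, Pi.single j 1, 0, 0) := by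
  have slice : HasFDerivAt (fun θ => ((x.1, θ, x.2.2.1, x.2.2.2) : Phase m))
      (.prod 0 (.prod (.id ℝ (Fin m → ℝ)) (.prod 0 0))) x.2.1 :=
    (hasFDerivAt_const _ _).prodMk ((hasFDerivAt_id _).prodMk
      ((hasFDerivAt_const _ _).prodMk (hasFDerivAt_const _ _)))
  have chain : HasFDerivAt (fun θ => p x.1 θ x.2.2.1 x.2.2.2) _ x.2.1 :=
    HasFDerivAt.comp (f := fun θ => (x.1, θ, x.2.2.1, x.2.2.2)) x.2.1 hp.hasFDerivAt slice
  rw [onPhase, pdTheta, chain.fderiv, scaledFDeriv_apply]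
  simp

theorem pdRho_eq_scaledFDeriv (hp : DifferentiableAt ℝ (onPhase p) x) :
    onPhase (pdRho p) x = scaledFDeriv (onPhase p) x (0, 0, 1, 0) := by
  have slice : HasDerivAt (fun s => ((x.1, x.2.1, s, x.2.2.2) : Phase m)) (0, 0, 1, 0) x.2.2.1 :=
    (hasDerivAt_const _ x.1).prodMk ((hasDerivAt_const _ x.2.1).prodMk
      ((hasDerivAt_id x.2.2.1).prodMk (hasDerivAt_const _ x.2.2.2)))
  have chain : HasDerivAt (fun s => p x.1 x.2.1 s x.2.2.2)
      (fderiv ℝ (onPhase p) x (0, 0, 1, 0)) x.2.2.1 :=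
    hp.hasFDerivAt.comp_hasDerivAt (f := fun s => (x.1, x.2.1, s, x.2.2.2)) x.2.2.1 slice
  rw [onPhase, pdRho, chain.deriv, scaledFDeriv_apply]
  simp

theorem mul_pdOmega_eq_scaledFDeriv (hp : DifferentiableAt ℝ (onPhase p) x) (j : Fin m) :
    x.1 * onPhase (pdOmega p j) x = scaledFDeriv (onPhase p) x (0, 0, 0, Pi.single j 1) := by
  have slice : HasFDerivAt (fun ω => ((x.1, x.2.1, x.2.2.1, ω) : Phase m))
      (.prod 0 (.prod 0 (.prod 0 (.id ℝ (Fin m → ℝ))))) x.2.2.2 :=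
    (hasFDerivAt_const _ _).prodMk ((hasFDerivAt_const _ _).prodMk
      ((hasFDerivAt_const _ _).prodMk (hasFDerivAt_id _)))
  have chain : HasFDerivAt (fun ω => p x.1 x.2.1 x.2.2.1 ω) _ x.2.2.2 :=
    HasFDerivAt.comp (f := fun ω => (x.1, x.2.1, x.2.2.1, ω)) x.2.2.2 hp.hasFDerivAt slice
  rw [onPhase, pdOmega, chain.fderiv, scaledFDeriv_apply, ← smul_eq_mul,
    ContinuousLinearMap.comp_apply, ← map_smul]
  simp

/-- The Hamiltonian vector field `(p_ρ, p_ω, -p_r, -p_θ)` of `p`. -/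
noncomputable def hamField (p : ℝ → (Fin m → ℝ) → ℝ → (Fin m → ℝ) → ℝ) (x : Phase m) : Phase m :=
  (onPhase (pdRho p) x, fun j => onPhase (pdOmega p j) x, -onPhase (pdR p) x,
    fun j => -onPhase (pdTheta p j) x)

/-- The vector `X` with `dilation r X = r • hamField p`, that is, `r` times the Hamiltonian vector
field expressed in the scaled directions `r ∂_r, ∂_θ, ∂_ρ, r ∂_ω`. -/
noncomputable def scaledHamField (p : ℝ → (Fin m → ℝ) → ℝ → (Fin m → ℝ) → ℝ) (x : Phase m) :
    Phase m :=
  (onPhase (pdRho p) x, fun j => x.1 * onPhase (pdOmega p j) x, -(x.1 * onPhase (pdR p) x),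
    fun j => -onPhase (pdTheta p j) x)

theorem dilation_scaledHamField (p : ℝ → (Fin m → ℝ) → ℝ → (Fin m → ℝ) → ℝ) (x : Phase m) :
    dilation x.1 (scaledHamField p x) = x.1 • hamField p x := by
  ext <;> simp [dilation_apply, scaledHamField, hamField]

theorem scaledFDeriv_scaledHamField (f : Phase m → ℝ)
    (p : ℝ → (Fin m → ℝ) → ℝ → (Fin m → ℝ) → ℝ) (x : Phase m) :
    scaledFDeriv f x (scaledHamField p x) = x.1 * fderiv ℝ f x (hamField p x) := by
  rw [scaledFDeriv, ContinuousLinearMap.comp_apply, dilation_scaledHamField, map_smul, smul_eq_mul]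

theorem IsSymbolOn.scaledHamField_isBigO {S : Set (Phase m)} {w : Phase m → ℝ}
    (hp : IsSymbolOn S w (onPhase p)) : scaledHamField p =O[𝓟 S] w := by
  have entry {g : Phase m → ℝ} (u : Phase m)
      (hg : ∀ x ∈ S, g x = scaledFDeriv (onPhase p) x u) : g =O[𝓟 S] w :=
    (isBigO_clm_apply_bounded hp.isBigO_scaledFDeriv (isBigO_const_one ℝ u _)).congr'
      (eventually_principal.2 fun x hx => (hg x hx).symm) .rfl
  have hd := hp.differentiableAt
  exact (entry _ fun x hx => pdRho_eq_scaledFDeriv (hd x hx)).prod_left <|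
    (isBigO_pi.2 fun j => entry _ fun x hx => mul_pdOmega_eq_scaledFDeriv (hd x hx) j).prod_left <|
    (entry _ fun x hx => mul_pdR_eq_scaledFDeriv (hd x hx)).neg_left.prod_left <|
    isBigO_pi.2 fun j => (entry _ fun x hx => pdTheta_eq_scaledFDeriv (hd x hx) j).neg_left

variable {r : ℝ → ℝ} {θ : ℝ → Fin m → ℝ} {ρ : ℝ → ℝ} {ω : ℝ → Fin m → ℝ} {I : Set ℝ} {t : ℝ}

theorem IsHamSolOn.hasDerivAt_phase (hsol : IsHamSolOn p r θ ρ ω I) (ht : t ∈ I) :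
    HasDerivAt (fun s => ((r s, θ s, ρ s, ω s) : Phase m)) (hamField p (r t, θ t, ρ t, ω t)) t := by
  obtain ⟨hr, hθ, hρ, hω⟩ := hsol t ht
  exact hr.prodMk ((hasDerivAt_pi.2 hθ).prodMk (hρ.prodMk (hasDerivAt_pi.2 hω)))

/-- The second derivative of `r²` along the flow of `p`, as a function on phase space. -/
noncomputable def virial (p : ℝ → (Fin m → ℝ) → ℝ → (Fin m → ℝ) → ℝ) (x : Phase m) : ℝ :=
  2 * (onPhase (pdRho p) x ^ 2 + scaledFDeriv (onPhase (pdRho p)) x (scaledHamField p x))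

theorem IsHamSolOn.hasDerivAt_deriv_sq (hsol : IsHamSolOn p r θ ρ ω I) (hI : I ∈ 𝓝 t)
    (hp : DifferentiableAt ℝ (onPhase (pdRho p)) (r t, θ t, ρ t, ω t)) :
    HasDerivAt (fun s => deriv (fun u => r u ^ 2) s) (virial p (r t, θ t, ρ t, ω t)) t := by
  have ht : t ∈ I := mem_of_mem_nhds hI
  have first_deriv : (fun s => deriv (fun u => r u ^ 2) s) =ᶠ[𝓝 t]
      fun s => 2 * r s * onPhase (pdRho p) (r s, θ s, ρ s, ω s) := by
    filter_upwards [hI] with s hs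
    simpa [onPhase] using ((hsol s hs).1.fun_pow 2).deriv
  have hpρ : HasDerivAt (fun s => onPhase (pdRho p) (r s, θ s, ρ s, ω s)) _ t :=
    hp.hasFDerivAt.comp_hasDerivAt (f := fun s => (r s, θ s, ρ s, ω s)) t (hsol.hasDerivAt_phase ht)
  refine ((((hsol t ht).1.const_mul 2).fun_mul hpρ).congr_of_eventuallyEq
    first_deriv).congr_deriv ?_
  simp only [virial, scaledFDeriv_scaledHamField, onPhase]
  ring

end Hamiltonian

section Energy

variable {m : ℕ} {hM : (Fin m → ℝ) → Matrix (Fin m) (Fin m) ℝ} {a0 : ℝ → (Fin m → ℝ) → ℝ}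
  {a1 : ℝ → (Fin m → ℝ) → Fin m → ℝ} {a2 : ℝ → (Fin m → ℝ) → Matrix (Fin m) (Fin m) ℝ}
  {x : Phase m}

/-- The quadratic form `∑ b^{jk}(r, θ) η_j η_k` in the scaled angular momentum `η = ω / r`. -/
noncomputable def angularForm (b : ℝ → (Fin m → ℝ) → Matrix (Fin m) (Fin m) ℝ) (x : Phase m) : ℝ :=
  ∑ j, ∑ k, b x.1 x.2.1 j k * (x.2.2.2 j / x.1) * (x.2.2.2 k / x.1)

/-- The conic energy `ρ² + h(η, η)`, that is, `energy` with all `a`-coefficients set to zero. -/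
noncomputable def freeEnergy (hM : (Fin m → ℝ) → Matrix (Fin m) (Fin m) ℝ) (x : Phase m) : ℝ :=
  x.2.2.1 * x.2.2.1 + angularForm (fun _ => hM) x

/-- The `a₁`-part `∑ a₁^j η_j` of the coefficient of `ρ` in the energy. -/
noncomputable def crossForm (a1 : ℝ → (Fin m → ℝ) → Fin m → ℝ) (x : Phase m) : ℝ :=
  ∑ j, a1 x.1 x.2.1 j * (x.2.2.2 j / x.1)

/-- The part `V = a₀ ρ² + a₁(η) ρ + a₂(η, η)` of the energy coming from the `a`-coefficients. -/
noncomputable def perturbation (a0 : ℝ → (Fin m → ℝ) → ℝ) (a1 : ℝ → (Fin m → ℝ) → Fin m → ℝ)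
    (a2 : ℝ → (Fin m → ℝ) → Matrix (Fin m) (Fin m) ℝ) (x : Phase m) : ℝ :=
  a0 x.1 x.2.1 * x.2.2.1 * x.2.2.1 + crossForm a1 x * x.2.2.1 + angularForm a2 x

/-- The derivative `W = 2 a₀ ρ + a₁(η)` of `perturbation` in `ρ`. -/
noncomputable def perturbationRho (a0 : ℝ → (Fin m → ℝ) → ℝ)
    (a1 : ℝ → (Fin m → ℝ) → Fin m → ℝ) (x : Phase m) : ℝ :=
  2 * (a0 x.1 x.2.1 * x.2.2.1) + crossForm a1 x

theorem angularForm_eq_div (b : ℝ → (Fin m → ℝ) → Matrix (Fin m) (Fin m) ℝ) (x : Phase m) :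
    angularForm b x = (∑ j, ∑ k, b x.1 x.2.1 j k * x.2.2.2 j * x.2.2.2 k) / x.1 ^ 2 := by
  simp only [angularForm, Finset.sum_div]
  exact Finset.sum_congr rfl fun j _ => Finset.sum_congr rfl fun k _ => by ring

theorem crossForm_mul_rho_eq_div (a1 : ℝ → (Fin m → ℝ) → Fin m → ℝ) (x : Phase m) :
    crossForm a1 x * x.2.2.1 = (∑ j, a1 x.1 x.2.1 j * x.2.2.1 * x.2.2.2 j) / x.1 := by
  simp only [crossForm, Finset.sum_div, Finset.sum_mul]
  exact Finset.sum_congr rfl fun j _ => by ring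

theorem onPhase_energy :
    onPhase (energy hM a0 a1 a2) = fun x => freeEnergy hM x + perturbation a0 a1 a2 x := by
  funext x
  simp only [onPhase, energy, freeEnergy, perturbation, angularForm_eq_div,
    crossForm_mul_rho_eq_div]
  ring

theorem onPhase_pdRho_energy :
    onPhase (pdRho (energy hM a0 a1 a2)) = fun x => 2 * x.2.2.1 + perturbationRho a0 a1 x := by
  funext x
  have quadratic : (fun s => energy hM a0 a1 a2 x.1 x.2.1 s x.2.2.2) = fun s =>
      (1 + a0 x.1 x.2.1) * s ^ 2 + crossForm a1 x * s +
        (angularForm (fun _ => hM) x + angularForm a2 x) := by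
    funext s
    have split := congrFun (onPhase_energy (hM := hM) (a0 := a0) (a1 := a1) (a2 := a2))
      (x.1, x.2.1, s, x.2.2.2)
    simp only [onPhase, freeEnergy, perturbation, angularForm, crossForm] at split ⊢
    rw [split]
    ring
  have hderiv := ((((hasDerivAt_pow 2 x.2.2.1).const_mul (1 + a0 x.1 x.2.1)).add
    ((hasDerivAt_id x.2.2.1).const_mul (crossForm a1 x))).add_const
      (angularForm (fun _ => hM) x + angularForm a2 x)).deriv
  simp only [onPhase, pdRho, quadratic, perturbationRho]
  refine hderiv.trans ?_
  push_cast
  ring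

theorem scaledFDeriv_freeEnergy_radial (hx : x.1 ≠ 0) (hd : DifferentiableAt ℝ (freeEnergy hM) x) :
    scaledFDeriv (freeEnergy hM) x (1, 0, 0, 0) = -2 * angularForm (fun _ => hM) x := by
  let q : ℝ := ∑ j, ∑ k, hM x.2.1 j k * x.2.2.2 j * x.2.2.2 k
  have radial_profile : (fun s => freeEnergy hM (s, x.2)) =
      fun s => x.2.2.1 * x.2.2.1 + q / s ^ 2 :=
    funext fun s => congrArg (x.2.2.1 * x.2.2.1 + ·) (angularForm_eq_div _ _)
  have hderiv : HasDerivAt (fun s => x.2.2.1 * x.2.2.1 + q / s ^ 2) _ x.1 :=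
    ((hasDerivAt_const x.1 q).fun_div (hasDerivAt_pow 2 x.1) (pow_ne_zero 2 hx)).const_add _
  rw [scaledFDeriv_radial hd, radial_profile, hderiv.deriv, angularForm_eq_div]
  field_simp
  ring

theorem virial_energy (hx : x.1 ≠ 0) (hfree : DifferentiableAt ℝ (freeEnergy hM) x)
    (hV : DifferentiableAt ℝ (perturbation a0 a1 a2) x)
    (hW : DifferentiableAt ℝ (perturbationRho a0 a1) x) :
    virial (energy hM a0 a1 a2) x = 8 * onPhase (energy hM a0 a1 a2) x +
      (8 * (perturbationRho a0 a1 x * x.2.2.1) +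
        2 * (perturbationRho a0 a1 x * perturbationRho a0 a1 x) -
        8 * perturbation a0 a1 a2 x - 4 * scaledFDeriv (perturbation a0 a1 a2) x (1, 0, 0, 0) +
        2 * scaledFDeriv (perturbationRho a0 a1) x
          (scaledHamField (energy hM a0 a1 a2) x)) := by
  have hρ : DifferentiableAt ℝ (fun y : Phase m => y.2.2.1) x := by fun_prop
  have hp : DifferentiableAt ℝ (onPhase (energy hM a0 a1 a2)) x :=
    onPhase_energy ▸ hfree.add hV
  have scaledHamField_rho : (scaledHamField (energy hM a0 a1 a2) x).2.2.1 =
      2 * angularForm (fun _ => hM) x - scaledFDeriv (perturbation a0 a1 a2) x (1, 0, 0, 0) := by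
    simp only [scaledHamField, mul_pdR_eq_scaledFDeriv hp]
    rw [onPhase_energy, scaledFDeriv_add hfree hV, _root_.add_apply,
      scaledFDeriv_freeEnergy_radial hx hfree]
    ring
  rw [virial, onPhase_pdRho_energy, scaledFDeriv_add (hρ.const_mul 2) hW,
    scaledFDeriv_const_mul hρ, _root_.add_apply, _root_.smul_apply,
    scaledFDeriv_rho_apply, scaledHamField_rho, onPhase_energy]
  simp only [smul_eq_mul, freeEnergy]
  ring

end Energy

section Estimates

open Asymptotics

variable {m : ℕ} {μ ν C₀ : ℝ} {U K : Set (Fin m → ℝ)} {S : Set (Phase m)}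

/-- The part of phase space over `(1, ∞) × K` on which `|ρ| ≤ C₀` and `|ω| ≤ C₀ r`. -/
def momentumRegion (K : Set (Fin m → ℝ)) (C₀ : ℝ) : Set (Phase m) :=
  {x | 1 < x.1 ∧ x.2.1 ∈ K ∧ |x.2.2.1| ≤ C₀ ∧ eNorm x.2.2.2 ≤ C₀ * x.1}

theorem abs_apply_le_eNorm (v : Fin m → ℝ) (j : Fin m) : |v j| ≤ eNorm v :=
  Real.abs_le_sqrt <| Finset.single_le_sum (f := fun i => v i ^ 2) (fun i _ => sq_nonneg (v i))
    (Finset.mem_univ j)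

theorem isSymbolOn_rho_momentumRegion :
    IsSymbolOn (momentumRegion K C₀) 1 fun x => x.2.2.1 :=
  .rho <| .of_bound C₀ <| eventually_principal.2 fun x hx => by simpa using hx.2.2.1

theorem isSymbolOn_eta_momentumRegion (j : Fin m) :
    IsSymbolOn (momentumRegion K C₀) 1 fun x => x.2.2.2 j / x.1 := by
  refine .eta (fun x hx => (one_pos.trans hx.1).ne') <| .of_bound C₀ <|
    eventually_principal.2 fun x hx => ?_
  have hr : 0 < x.1 := one_pos.trans hx.1
  have hη : |x.2.2.2 j| / x.1 ≤ C₀ :=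
    (div_le_iff₀ hr).2 ((abs_apply_le_eNorm _ j).trans hx.2.2.2)
  simpa [abs_div, abs_of_pos hr] using hη

theorem isBigO_rpow_neg_one (hμ : 0 ≤ μ) (hS : ∀ x ∈ S, 1 ≤ x.1) :
    (fun x => x.1 ^ (-μ)) =O[𝓟 S] (1 : Phase m → ℝ) := by
  refine .of_bound 1 <| eventually_principal.2 fun x hx => ?_
  have hr : 1 ≤ x.1 := hS x hx
  have rpow_le_one : x.1 ^ (-μ) ≤ 1 :=
    Real.rpow_le_one_of_one_le_of_nonpos hr (neg_nonpos.2 hμ)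
  simpa [abs_of_nonneg (Real.rpow_nonneg (zero_le_one.trans hr) (-μ))] using rpow_le_one

theorem DecayOn.isSymbolOn {f : ℝ → (Fin m → ℝ) → ℝ} (hf : DecayOn f ν 1 K) (hμν : μ ≤ ν)
    (hS : ∀ x ∈ S, 1 < x.1 ∧ x.2.1 ∈ K)
    (hd : ∀ x ∈ S, DifferentiableAt ℝ (fun z : ℝ × (Fin m → ℝ) => f z.1 z.2) (x.1, x.2.1)) :
    IsSymbolOn S (fun x => x.1 ^ (-μ)) fun x => f x.1 x.2.1 := by
  have decay (k : ℕ) (α : List (Fin m)) :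
      (fun x => x.1 ^ k * pderivR^[k] (thetaDerivs α f) x.1 x.2.1) =O[𝓟 S]
        fun x => x.1 ^ (-μ) := by
    obtain ⟨C, hC, hbound⟩ := hf k α
    refine .of_bound C <| eventually_principal.2 fun x hx => ?_
    obtain ⟨hr, hθ⟩ := hS x hx
    have hr0 : 0 < x.1 := one_pos.trans hr
    rw [norm_mul, Real.norm_of_nonneg (pow_nonneg hr0.le k),
      Real.norm_of_nonneg (Real.rpow_nonneg hr0.le _)]
    calc x.1 ^ k * |pderivR^[k] (thetaDerivs α f) x.1 x.2.1|
        ≤ x.1 ^ k * (C * x.1 ^ (-ν - k)) := by gcongr; exact hbound x.1 hr x.2.1 hθ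
      _ = C * x.1 ^ (-ν) := by
        rw [Real.rpow_sub_natCast hr0.ne']; field_simp
      _ ≤ C * x.1 ^ (-μ) := by gcongr; exact hr.le
  exact .comp_base hd (by simpa [thetaDerivs] using decay 0 [])
    (by simpa [thetaDerivs] using decay 1 [])
    fun j => by simpa [thetaDerivs] using decay 0 [j]

theorem IsSymbolOn.comp_theta_of_contDiffOn {g : (Fin m → ℝ) → ℝ} (hU : IsOpen U)
    (hg : ContDiffOn ℝ 1 g U) (hK : IsCompact K) (hKU : K ⊆ U) (hS : ∀ x ∈ S, x.2.1 ∈ K) :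
    IsSymbolOn S 1 fun x => g x.2.1 := by
  have bounded {φ : (Fin m → ℝ) → ℝ} (hφ : ContinuousOn φ U) :
      (fun x : Phase m => φ x.2.1) =O[𝓟 S] (1 : Phase m → ℝ) := by
    obtain ⟨C, hC⟩ := hK.exists_bound_of_continuousOn (hφ.mono hKU)
    exact .of_bound C <| eventually_principal.2 fun x hx => by simpa using hC _ (hS x hx)
  have hd (x : Phase m) (hx : x ∈ S) : DifferentiableAt ℝ g x.2.1 :=
    (hg.differentiableOn one_ne_zero).differentiableAt (hU.mem_nhds (hKU (hS x hx)))
  refine .comp_base (f := fun _ => g) (fun x hx => ?_) (bounded hg.continuousOn) ?_ fun j => ?_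
  · exact DifferentiableAt.comp (f := Prod.snd) (x.1, x.2.1) (hd x hx) differentiableAt_snd
  · simpa [pderivR] using isBigO_zero _ _
  · exact bounded ((hg.continuousOn_fderiv_of_isOpen hU le_rfl).clm_apply continuousOn_const)

end Estimates

section Virial

open Asymptotics

variable {m : ℕ} {S : Set (Phase m)} {w : Phase m → ℝ}
  {hM : (Fin m → ℝ) → Matrix (Fin m) (Fin m) ℝ} {a0 : ℝ → (Fin m → ℝ) → ℝ}
  {a1 : ℝ → (Fin m → ℝ) → Fin m → ℝ} {a2 : ℝ → (Fin m → ℝ) → Matrix (Fin m) (Fin m) ℝ}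

namespace IsSymbolOn

theorem angularForm {b : ℝ → (Fin m → ℝ) → Matrix (Fin m) (Fin m) ℝ}
    (hη : ∀ j, IsSymbolOn S 1 fun x => x.2.2.2 j / x.1)
    (hb : ∀ j k, IsSymbolOn S w fun x => b x.1 x.2.1 j k) : IsSymbolOn S w (angularForm b) :=
  .sum fun j _ => .sum fun k _ => ((hb j k).mul_bounded (hη j)).mul_bounded (hη k)

theorem crossForm (hη : ∀ j, IsSymbolOn S 1 fun x => x.2.2.2 j / x.1)
    (ha1 : ∀ j, IsSymbolOn S w fun x => a1 x.1 x.2.1 j) : IsSymbolOn S w (crossForm a1) :=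
  .sum fun j _ => (ha1 j).mul_bounded (hη j)

theorem freeEnergy (hρ : IsSymbolOn S 1 fun x => x.2.2.1)
    (hη : ∀ j, IsSymbolOn S 1 fun x => x.2.2.2 j / x.1)
    (hh : ∀ j k, IsSymbolOn S 1 fun x => hM x.2.1 j k) : IsSymbolOn S 1 (freeEnergy hM) :=
  (hρ.mul_bounded hρ).add (.angularForm hη hh)

theorem perturbation (hρ : IsSymbolOn S 1 fun x => x.2.2.1)
    (hη : ∀ j, IsSymbolOn S 1 fun x => x.2.2.2 j / x.1)
    (ha0 : IsSymbolOn S w fun x => a0 x.1 x.2.1)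
    (ha1 : ∀ j, IsSymbolOn S w fun x => a1 x.1 x.2.1 j)
    (ha2 : ∀ j k, IsSymbolOn S w fun x => a2 x.1 x.2.1 j k) :
    IsSymbolOn S w (perturbation a0 a1 a2) :=
  (((ha0.mul_bounded hρ).mul_bounded hρ).add ((crossForm hη ha1).mul_bounded hρ)).add
    (.angularForm hη ha2)

theorem perturbationRho (hρ : IsSymbolOn S 1 fun x => x.2.2.1)
    (hη : ∀ j, IsSymbolOn S 1 fun x => x.2.2.2 j / x.1)
    (ha0 : IsSymbolOn S w fun x => a0 x.1 x.2.1)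
    (ha1 : ∀ j, IsSymbolOn S w fun x => a1 x.1 x.2.1 j) :
    IsSymbolOn S w (perturbationRho a0 a1) :=
  ((ha0.mul_bounded hρ).const_mul 2).add (crossForm hη ha1)

end IsSymbolOn

theorem virial_energy_sub_isBigO (hS : ∀ x ∈ S, x.1 ≠ 0) (hw : w =O[𝓟 S] (1 : Phase m → ℝ))
    (hρ : IsSymbolOn S 1 fun x => x.2.2.1) (hfree : IsSymbolOn S 1 (freeEnergy hM))
    (hV : IsSymbolOn S w (perturbation a0 a1 a2)) (hW : IsSymbolOn S w (perturbationRho a0 a1)) :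
    (fun x => virial (energy hM a0 a1 a2) x - 8 * onPhase (energy hM a0 a1 a2) x) =O[𝓟 S] w := by
  have hp : IsSymbolOn S 1 (onPhase (energy hM a0 a1 a2)) :=
    onPhase_energy ▸ hfree.add (hV.mono hw)
  have hWρ := isBigO_mul_bounded hW.isBigO hρ.isBigO
  have hWW := isBigO_mul_bounded hW.isBigO (hW.isBigO.trans hw)
  have hVr := isBigO_clm_apply_bounded hV.isBigO_scaledFDeriv
    (isBigO_const_one ℝ ((1, 0, 0, 0) : Phase m) _)
  have hWX := isBigO_clm_apply_bounded hW.isBigO_scaledFDeriv hp.scaledHamField_isBigO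
  exact (((((hWρ.const_mul_left 8).add (hWW.const_mul_left 2)).sub
    (hV.isBigO.const_mul_left 8)).sub (hVr.const_mul_left 4)).add
      (hWX.const_mul_left 2)).congr' (eventually_principal.2 fun x hx => eq_sub_of_add_eq'
        (virial_energy (hS x hx) (hfree.differentiableAt x hx) (hV.differentiableAt x hx)
          (hW.differentiableAt x hx)).symm) .rfl

end Virial

section Coeffs

open Asymptotics

variable {m : ℕ} {μ C₀ : ℝ} {U K : Set (Fin m → ℝ)}

theorem differentiableAt_base_of_contDiffOn {f : ℝ × (Fin m → ℝ) → ℝ} (hU : IsOpen U)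
    (hKU : K ⊆ U) (hf : ContDiffOn ℝ (⊤ : ℕ∞) f (Ioi 1 ×ˢ U)) {x : Phase m}
    (hx : x ∈ momentumRegion K C₀) : DifferentiableAt ℝ f (x.1, x.2.1) :=
  (hf.differentiableOn (by simp)).differentiableAt
    ((isOpen_Ioi.prod hU).mem_nhds ⟨hx.1, hKU hx.2.1⟩)

namespace Coeffs

variable (c : Coeffs m μ U)

theorem isSymbolOn_hM (hU : IsOpen U) (hK : IsCompact K) (hKU : K ⊆ U) (j k : Fin m) :
    IsSymbolOn (momentumRegion K C₀) 1 fun x => c.hM x.2.1 j k :=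
  .comp_theta_of_contDiffOn hU ((c.hM_smooth j k).of_le (by simp)) hK hKU fun _ hx => hx.2.1

theorem isSymbolOn_a0 (hU : IsOpen U) (hK : IsCompact K) (hKU : K ⊆ U) :
    IsSymbolOn (momentumRegion K C₀) (fun x => x.1 ^ (-μ)) fun x => c.a0 x.1 x.2.1 :=
  (c.a0_decay K hK hKU).isSymbolOn (by linarith) (fun _ hx => ⟨hx.1, hx.2.1⟩)
    fun _ => differentiableAt_base_of_contDiffOn hU hKU c.a0_smooth

theorem isSymbolOn_a1 (hU : IsOpen U) (hK : IsCompact K) (hKU : K ⊆ U) (j : Fin m) :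
    IsSymbolOn (momentumRegion K C₀) (fun x => x.1 ^ (-μ)) fun x => c.a1 x.1 x.2.1 j :=
  (c.a1_decay K hK hKU j).isSymbolOn le_rfl (fun _ hx => ⟨hx.1, hx.2.1⟩)
    fun _ => differentiableAt_base_of_contDiffOn hU hKU (c.a1_smooth j)

theorem isSymbolOn_a2 (hU : IsOpen U) (hK : IsCompact K) (hKU : K ⊆ U) (j k : Fin m) :
    IsSymbolOn (momentumRegion K C₀) (fun x => x.1 ^ (-μ)) fun x => c.a2 x.1 x.2.1 j k :=
  (c.a2_decay K hK hKU j k).isSymbolOn le_rfl (fun _ hx => ⟨hx.1, hx.2.1⟩)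
    fun _ => differentiableAt_base_of_contDiffOn hU hKU (c.a2_smooth j k)

theorem isSymbolOn_perturbationRho (hU : IsOpen U) (hK : IsCompact K) (hKU : K ⊆ U) :
    IsSymbolOn (momentumRegion K C₀) (fun x => x.1 ^ (-μ)) (perturbationRho c.a0 c.a1) :=
  .perturbationRho isSymbolOn_rho_momentumRegion isSymbolOn_eta_momentumRegion
    (c.isSymbolOn_a0 hU hK hKU) (c.isSymbolOn_a1 hU hK hKU)

theorem differentiableAt_pdRho_p (hU : IsOpen U) (hK : IsCompact K) (hKU : K ⊆ U) {x : Phase m}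
    (hx : x ∈ momentumRegion K C₀) : DifferentiableAt ℝ (onPhase (pdRho c.p)) x := by
  rw [p, onPhase_pdRho_energy]
  exact DifferentiableAt.add (by fun_prop)
    ((c.isSymbolOn_perturbationRho hU hK hKU).differentiableAt x hx)

theorem virial_sub_isBigO (hμ : 0 ≤ μ) (hU : IsOpen U) (hK : IsCompact K) (hKU : K ⊆ U) :
    (fun x => virial c.p x - 8 * onPhase c.p x) =O[𝓟 (momentumRegion K C₀)]
      fun x => x.1 ^ (-μ) :=
  virial_energy_sub_isBigO (fun _ hx => (one_pos.trans hx.1).ne')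
    (isBigO_rpow_neg_one hμ fun _ hx => hx.1.le) isSymbolOn_rho_momentumRegion
    (.freeEnergy isSymbolOn_rho_momentumRegion isSymbolOn_eta_momentumRegion
      (c.isSymbolOn_hM hU hK hKU))
    (.perturbation isSymbolOn_rho_momentumRegion isSymbolOn_eta_momentumRegion
      (c.isSymbolOn_a0 hU hK hKU) (c.isSymbolOn_a1 hU hK hKU) (c.isSymbolOn_a2 hU hK hKU))
    (c.isSymbolOn_perturbationRho hU hK hKU)

end Coeffs

end Coeffs

theorem statement_3_general {m : ℕ} {μ : ℝ} (hμ : 0 ≤ μ) {U : Set (Fin m → ℝ)} (hU : IsOpen U)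
    (c : Coeffs m μ U) {K : Set (Fin m → ℝ)} (hK : IsCompact K) (hKU : K ⊆ U) (C₀ : ℝ) :
    ∃ C > (0 : ℝ), ∀ (I : Set ℝ) (r : ℝ → ℝ) (θ : ℝ → Fin m → ℝ) (ρ : ℝ → ℝ)
      (ω : ℝ → Fin m → ℝ), IsHamSolOn c.p r θ ρ ω I →
      ∀ t, I ∈ 𝓝 t → 1 < r t → θ t ∈ K → |ρ t| ≤ C₀ → eNorm (ω t) ≤ C₀ * r t →
        ∃ d2 : ℝ, HasDerivAt (fun s => deriv (fun u => r u ^ 2) s) d2 t ∧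
          |d2 - 8 * c.p (r t) (θ t) (ρ t) (ω t)| ≤ C * r t ^ (-μ) := by
  obtain ⟨C, hC, hbound⟩ := (c.virial_sub_isBigO (C₀ := C₀) hμ hU hK hKU).exists_pos
  refine ⟨C, hC, fun I r θ ρ ω hsol t hI hr hθ hρ hω => ?_⟩
  have hx : ((r t, θ t, ρ t, ω t) : Phase m) ∈ momentumRegion K C₀ := ⟨hr, hθ, hρ, hω⟩
  refine ⟨_, hsol.hasDerivAt_deriv_sq hI (c.differentiableAt_pdRho_p hU hK hKU hx), ?_⟩
  have virial_bound := Asymptotics.isBigOWith_principal.1 hbound _ hx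
  rwa [Real.norm_of_nonneg (Real.rpow_nonneg (one_pos.trans hr).le _)] at virial_bound

/-- Along trajectories of energy `p₀` that lie far out in the end,
`(d²/dt²)(r(t)²) = 8p₀ + O(r(t)^{-μ})`. -/
theorem statement_3 {m : ℕ} (hm : 1 ≤ m) {μ : ℝ} (hμ : μ ∈ Ioo (0:ℝ) 1)
    {U : Set (Fin m → ℝ)} (hU : IsOpen U) (c : Coeffs m μ U)
    (K : Set (Fin m → ℝ)) (hK : IsCompact K) (hKU : K ⊆ U)
    (C₀ : ℝ) (hC₀ : 0 < C₀) :
    ∃ R ≥ (1:ℝ), ∃ C > (0:ℝ),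
      ∀ (I : Set ℝ), IsOpen I →
      ∀ (r : ℝ → ℝ) (θ : ℝ → Fin m → ℝ) (ρ : ℝ → ℝ) (ω : ℝ → Fin m → ℝ) (p₀ : ℝ),
        IsHamSolOn c.p r θ ρ ω I →
        (∀ t ∈ I, c.p (r t) (θ t) (ρ t) (ω t) = p₀) →
        ∀ t ∈ I, r t ∈ Ioi R → θ t ∈ K → |ρ t| ≤ C₀ → eNorm (ω t) ≤ C₀ * r t →
          ∃ d2 : ℝ, HasDerivAt (fun s => deriv (fun u => (r u) ^ 2) s) d2 t ∧
            |d2 - 8 * p₀| ≤ C * (r t) ^ (-μ) := by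
  obtain ⟨C, hC, hbound⟩ := statement_3_general hμ.1.le hU c hK hKU C₀
  exact ⟨1, le_rfl, C, hC, fun I hI r θ ρ ω _ hsol henergy t ht =>
    henergy t ht ▸ hbound I r θ ρ ω hsol t (hI.mem_nhds ht)⟩

end Scattering
end
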